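/- arXiv:1901.03406 — 3 statements merged into one kernel-verified Lean document; each statement's English description precedes it below -/
import Mathlib

section
/- Let G be a countable, infinite discrete group. Then there exists a family of continuum many (2^ℵ₀) free, metrizable, minimal G-flows that are mutually disjoint, i.e., the product of the flows in every finite subfamily is minimal. -/
open Pointwise

section Defs

variable (G : Type*) [Group G]

/-- The right-shift of `G` on `G → A`: `(g • z) h = z (h * g)`. -/
instance (priority := high) shiftSMul (A : Type*) : SMul G (G → A) :=
  ⟨fun g z h => z (h * g)⟩

/-- The right-shift action of `G` on `G → A` is a `G`-action (the Bernoulli flow when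
`A = Bool`). -/
instance shiftMulAction (A : Type*) : MulAction G (G → A) where
  one_smul z := funext fun h => by show z (h * 1) = z h; rw [mul_one]
  mul_smul g₁ g₂ z := funext fun h => by
    show z (h * (g₁ * g₂)) = z (h * g₁ * g₂)
    rw [mul_assoc]

/-- `S ⊆ G` is `D`-separated if `Dg ∩ Dh = ∅` for all distinct `g, h ∈ S`. -/
def DSeparated (D S : Set G) : Prop :=
  ∀ g ∈ S, ∀ h ∈ S, g ≠ h → Disjoint (D * ({g} : Set G)) (D * ({h} : Set G))

/-- The separated covering property for a `G`-flow `X`: for every finite `D ⊆ G`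
and every nonempty open `U ⊆ X` there is a `D`-separated `S ⊆ G` with `S⁻¹U = X`. -/
def SCP (X : Type*) [TopologicalSpace X] [MulAction G X] : Prop :=
  ∀ D : Set G, D.Finite → ∀ U : Set X, IsOpen U → U.Nonempty →
    ∃ S : Set G, DSeparated G D S ∧ ∀ x : X, ∃ s ∈ S, s • x ∈ U

/-- A `G`-flow is minimal if every orbit is dense. -/
def IsMinimalFlow (X : Type*) [TopologicalSpace X] [MulAction G X] : Prop :=
  ∀ x : X, Dense (MulAction.orbit G x)

/-- Two `G`-flows `X` and `Y` are disjoint if the only closed `G`-invariant subset of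
`X × Y` projecting onto both factors is `X × Y` itself. -/
def FlowsDisjoint (X Y : Type*) [TopologicalSpace X] [TopologicalSpace Y]
    [MulAction G X] [MulAction G Y] : Prop :=
  ∀ J : Set (X × Y), IsClosed J → (∀ (g : G), ∀ p ∈ J, g • p ∈ J) →
    Prod.fst '' J = Set.univ → Prod.snd '' J = Set.univ → J = Set.univ

end Defs

universe u v

/-- A bundled `G`-flow carrier: a type with a topology and a `G`-action. -/
structure GFlow (G : Type u) [Group G] : Type (u + 1) where
  carrier : Type u
  [topology : TopologicalSpace carrier]
  [mulAction : MulAction G carrier]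

attribute [instance] GFlow.topology GFlow.mulAction

/-!
The flows are subshifts of the space of all `x : G → G → Fin 3`, on which `G` shifts the first
argument. If `γ ≠ 1` fixes `x`, then `x γ γ = x 1 γ`; hence `G` acts freely on the configurations
whose row `γ`, for every `γ ≠ 1`, properly colours the edges `h — γ * h`; such colourings exist with
three colours, and partial ones extend.

Call a subshift flexible if it only constrains finitely many rows and realizes any prescribed
patterns at sufficiently distant places. Given flexible subshifts `X i` for finitely many `i` and a
finite pattern occurring in each, plant the pattern of `X i` along `B i * S`, where `B i` is a fixed
finite set and `S` an arbitrary net. The resulting smaller subshifts are again flexible, and the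
sets `B i` can be chosen such that, whatever the nets `S i` are, some `g : G` lies in all
`B i * S i`; thus every point of the product of the new subshifts shows the given patterns
simultaneously at `g`. This is where generic finite subsets of `G` and a tournament come in.

Treating all finite patterns of larger and larger windows in turn, and splitting every subshift into
two equal copies after each stage, one obtains a binary tree of flexible subshifts. The flows are
the intersections along its branches: finitely many branches are distinct from some level on, and
from there on the finite patterns of their product recur in every orbit.
-/

namespace FreeMinimalFlows

section Graphs

variable {V α : Type*}

theorem exists_isIndepSet_superset_dominating (H : SimpleGraph V) {S₀ : Set V}
    (hS₀ : H.IsIndepSet S₀) :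
    ∃ S ⊇ S₀, H.IsIndepSet S ∧ ∀ v ∉ S, ∃ s ∈ S, H.Adj s v := by
  have hsymm : ∀ S : Set V, IsChain (fun v w ↦ ¬H.Adj v w) S ↔ H.IsIndepSet S := fun S ↦
    ⟨fun h v hv w hw hvw ↦ (h hv hw hvw).elim id fun h' hadj ↦ h' hadj.symm,
      fun h v hv w hw hvw ↦ Or.inl (h hv hw hvw)⟩
  obtain ⟨S, ⟨hS, hmax⟩, hsub⟩ := ((hsymm S₀).2 hS₀).exists_maxChain
  refine ⟨S, hsub, (hsymm S).1 hS, fun v hv ↦ ?_⟩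
  by_contra! hfar
  have hins : IsChain (fun v w ↦ ¬H.Adj v w) (insert v S) :=
    hS.insert fun s hs _ ↦ Or.inr (hfar s hs)
  exact hv (hmax hins (Set.subset_insert v S) ▸ Set.mem_insert v S)

/-- An independent set of `H □ ⊤` is a partial proper colouring of `H`; a dominating one is total,
since at every vertex the neighbours leave a colour unblocked. -/
theorem exists_coloring_extending [Finite α] (H : SimpleGraph V) {S₀ : Set (V × α)}
    (hS₀ : (H □ (⊤ : SimpleGraph α)).IsIndepSet S₀)
    (hdeg : ∀ v, (H.neighborSet v).encard < ENat.card α) :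
    ∃ C : H.Coloring α, ∀ p ∈ S₀, C p.1 = p.2 := by
  obtain ⟨S, hsub, hindep, hdom⟩ := exists_isIndepSet_superset_dominating _ hS₀
  have hunique : ∀ v a b, (v, a) ∈ S → (v, b) ∈ S → a = b := by
    intro v a b ha hb
    by_contra hab
    exact hindep ha hb (by simpa using hab) (by simpa [SimpleGraph.boxProd_adj] using hab)
  have htotal : ∀ v, ∃ a, (v, a) ∈ S := by
    intro v
    by_contra! hv
    have hblocked : ∀ a, ∃ w ∈ H.neighborSet v, (w, a) ∈ S := by
      intro a
      obtain ⟨⟨w, b⟩, hwb, hadj⟩ := hdom (v, a) (hv a)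
      rcases SimpleGraph.boxProd_adj.1 hadj with ⟨hwv, hab⟩ | ⟨-, hwv⟩
      · obtain rfl : b = a := hab
        exact ⟨w, hwv.symm, hwb⟩
      · obtain rfl : w = v := hwv
        exact absurd hwb (hv b)
    choose w hw hwS using hblocked
    have hinj : Function.Injective w := fun a b hab ↦
      hunique (w a) a b (hwS a) (hab ▸ hwS b)
    refine (hdeg v).not_ge ?_
    rw [← Set.encard_univ, ← hinj.encard_image]
    exact Set.encard_le_encard (by rintro _ ⟨a, -, rfl⟩; exact hw a)
  choose c hc using htotal
  refine ⟨SimpleGraph.Coloring.mk c fun {v w} hvw hcvw ↦ ?_, fun p hp ↦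
    hunique p.1 _ _ (hc p.1) (hsub hp)⟩
  exact hindep (hc v) (hc w) (by simp [hvw.ne]) (SimpleGraph.boxProd_adj.2 (Or.inl ⟨hvw, hcvw⟩))

end Graphs

section Separated

variable {G : Type*} [Group G]

/-- A set `B` is `E`-separated if distinct `b, b' ∈ B` satisfy `b * b'⁻¹ ∉ E`. -/
def IsSeparated (E B : Set G) : Prop :=
  ∀ b ∈ B, ∀ b' ∈ B, b * b'⁻¹ ∈ E → b = b'

theorem IsSeparated.anti {E E' B : Set G} (hB : IsSeparated E' B) (hE : E ⊆ E') :
    IsSeparated E B :=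
  fun b hb b' hb' h ↦ hB b hb b' hb' (hE h)

theorem IsSeparated.mul {E Q R : Set G} (hQ : IsSeparated E Q)
    (hR : IsSeparated (Q⁻¹ * E * Q) R) : IsSeparated E (Q * R) := by
  rintro _ ⟨q, hq, r, hr, rfl⟩ _ ⟨q', hq', r', hr', rfl⟩ hE
  obtain rfl : r = r' := hR r hr r' hr' (Set.mem_mul.2
    ⟨_, Set.mul_mem_mul (Set.inv_mem_inv.2 hq) hE, q', hq', by group⟩)
  rw [hQ q hq q' hq' (by simpa [mul_assoc] using hE)]

/-- A finite nonempty `E`-separated set. -/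
structure IsFinitePacking (E B : Set G) : Prop where
  finite : B.Finite
  nonempty : B.Nonempty
  isSeparated : IsSeparated E B

theorem isFinitePacking_one (E : Set G) : IsFinitePacking E 1 :=
  ⟨Set.finite_one, Set.one_nonempty, by rintro _ rfl _ rfl -; rfl⟩

theorem IsFinitePacking.mul {E Q R : Set G} (hQ : IsFinitePacking E Q)
    (hR : IsFinitePacking (Q⁻¹ * E * Q) R) : IsFinitePacking E (Q * R) :=
  ⟨hQ.finite.mul hR.finite, hQ.nonempty.mul hR.nonempty, hQ.isSeparated.mul hR.isSeparated⟩

/-- An `M`-net is an `M`-separated set which every translate of `M` meets. For symmetric `M ∋ 1`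
these are the maximal `M`-separated sets. -/
structure IsNet (M S : Set G) : Prop where
  isSeparated : IsSeparated M S
  exists_mem : ∀ g, ∃ s ∈ S, s * g⁻¹ ∈ M

theorem IsNet.translate {M S : Set G} (hS : IsNet M S) (g : G) : IsNet M {s | s * g ∈ S} where
  isSeparated s hs s' hs' hM :=
    mul_right_cancel (hS.isSeparated _ hs _ hs' (by simpa [mul_assoc] using hM))
  exists_mem h := by
    obtain ⟨s, hs, hM⟩ := hS.exists_mem (h * g)
    exact ⟨s * g⁻¹, by simpa using hs, by simpa [mul_assoc] using hM⟩

theorem exists_finite_symmetric_superset {E : Set G} (hE : E.Finite) :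
    ∃ E' ⊇ E, E'.Finite ∧ 1 ∈ E' ∧ E'⁻¹ = E' :=
  ⟨insert 1 (E ∪ E⁻¹), fun _ hg ↦ Or.inr (Or.inl hg), (hE.union hE.inv).insert 1,
    Set.mem_insert _ _, by simp [Set.inv_insert, Set.union_comm]⟩

theorem exists_isNet_superset {M S₀ : Set G} (hM1 : 1 ∈ M) (hM : M⁻¹ = M)
    (hS₀ : IsSeparated M S₀) : ∃ S ⊇ S₀, IsNet M S := by
  let H : SimpleGraph G := SimpleGraph.fromRel fun a b ↦ a * b⁻¹ ∈ M
  have hinv : ∀ {a b : G}, a * b⁻¹ ∈ M → b * a⁻¹ ∈ M := fun {a b} h ↦ by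
    rw [← hM]; simpa using h
  have hadj : ∀ {a b}, H.Adj a b ↔ a ≠ b ∧ a * b⁻¹ ∈ M := fun {a b} ↦
    and_congr_right fun _ ↦ or_iff_left_of_imp hinv
  obtain ⟨S, hsub, hindep, hdom⟩ := exists_isIndepSet_superset_dominating H (S₀ := S₀)
    fun a ha b hb hab h ↦ hab (hS₀ a ha b hb (hadj.1 h).2)
  refine ⟨S, hsub, fun a ha b hb h ↦ ?_, fun g ↦ ?_⟩
  · by_contra hab
    exact hindep ha hb hab (hadj.2 ⟨hab, h⟩)
  · by_cases hg : g ∈ S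
    · exact ⟨g, hg, by simpa using hM1⟩
    · obtain ⟨s, hs, h⟩ := hdom g hg
      exact ⟨s, hs, (hadj.1 h).2⟩

/-- Prescribed nets, each seen through the window `L` at its own place, can be realized by a
single net as soon as the places of different ones are far apart. -/
theorem exists_isNet_glue {M L : Set G} (hM1 : 1 ∈ M) (hM : M⁻¹ = M) {P : Set (G × Set G)}
    (hP : ∀ p ∈ P, IsNet M p.2)
    (hfar : ∀ p ∈ P, ∀ q ∈ P, p.1 * q.1⁻¹ ∈ (M * L)⁻¹ * M * (M * L) → p.2 = q.2) :
    ∃ S, IsNet M S ∧ ∀ p ∈ P, ∀ s ∈ S, s * p.1⁻¹ ∈ L → s ∈ p.2 := by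
  let S₀ : Set G := {s | ∃ p ∈ P, s * p.1⁻¹ ∈ M * L ∧ s ∈ p.2}
  have hS₀ : IsSeparated M S₀ := by
    rintro s ⟨p, hp, hsL, hs⟩ t ⟨q, hq, htL, ht⟩ hst
    have hpq : p.2 = q.2 := hfar p hp q hq (Set.mem_mul.2
      ⟨_, Set.mul_mem_mul (Set.inv_mem_inv.2 hsL) hst, _, htL, by group⟩)
    exact (hP p hp).isSeparated s hs t (hpq ▸ ht) hst
  obtain ⟨S, hsub, hS⟩ := exists_isNet_superset hM1 hM hS₀
  refine ⟨S, hS, fun p hp s hs hsL ↦ ?_⟩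
  obtain ⟨t, ht, hts⟩ := (hP p hp).exists_mem s
  have htL : t * p.1⁻¹ ∈ M * L := Set.mem_mul.2 ⟨_, hts, _, hsL, by group⟩
  obtain rfl : t = s := hS.isSeparated t (hsub ⟨p, hp, htL, ht⟩) s hs hts
  exact ht

end Separated

section Avoidance

variable {ι β γ : Type*}

/-- On `s`, the `i`-th coordinate is a function of the remaining ones. -/
def DeterminedAt (i : ι) (s : Set (ι → β)) : Prop :=
  ∀ r ∈ s, ∀ r' ∈ s, (∀ j ≠ i, r j = r' j) → r i = r' i

open Classical in
theorem DeterminedAt.card_filter_mul_card_le [Fintype ι] {i : ι} {s : Set (ι → β)}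
    (hs : DeterminedAt i s) (F : Finset β) :
    ((Fintype.piFinset fun _ ↦ F).filter (· ∈ s)).card * F.card ≤
      (Fintype.piFinset fun _ : ι ↦ F).card := by
  rw [← Finset.card_product]
  refine Finset.card_le_card_of_injOn (fun p ↦ Function.update p.1 i p.2) ?_ ?_
  · rintro ⟨r, x⟩ hp
    simp only [Finset.coe_product, Set.mem_prod, Finset.mem_coe, Finset.mem_filter,
      Fintype.mem_piFinset] at hp ⊢
    intro j
    by_cases hj : j = i
    · subst hj
      simpa using hp.2
    · simpa [hj] using hp.1.1 j
  · rintro ⟨r, x⟩ hp ⟨r', x'⟩ hp' h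
    simp only [Finset.coe_product, Set.mem_prod, Finset.mem_coe, Finset.mem_filter] at hp hp'
    have hoff : ∀ j ≠ i, r j = r' j := fun j hj ↦ by simpa [hj] using congrFun h j
    have hx : x = x' := by simpa using congrFun h i
    have hr : r = r' := funext fun j ↦ by
      by_cases hj : j = i
      · exact hj ▸ hs r hp.1.2 r' hp'.1.2 hoff
      · exact hoff j hj
    rw [hr, hx]

theorem exists_forall_mem_and_forall_notMem_of_determinedAt [Finite ι] {L : Set β}
    (hL : L.Infinite) {𝓑 : Set (Set (ι → β))} (h𝓑 : 𝓑.Finite) :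
    ∃ r : ι → β, (∀ i, r i ∈ L) ∧ ∀ s ∈ 𝓑, (∃ i, DeterminedAt i s) → r ∉ s := by
  classical
  have := Fintype.ofFinite ι
  let 𝓓 : Finset (Set (ι → β)) := h𝓑.toFinset.filter fun s ↦ ∃ i, DeterminedAt i s
  obtain ⟨F, hFL, hF⟩ := hL.exists_subset_card_eq (𝓓.card + 1)
  let grid : Finset (ι → β) := Fintype.piFinset fun _ ↦ F
  by_contra! hbad
  have hcover : grid ⊆ 𝓓.biUnion fun s ↦ grid.filter (· ∈ s) := by
    intro r hr
    obtain ⟨s, hs, hdet, hrs⟩ := hbad r fun i ↦ hFL (Fintype.mem_piFinset.1 hr i)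
    simpa [𝓓] using ⟨s, ⟨hs, hdet⟩, hr, hrs⟩
  have hgrid : 0 < grid.card := Finset.card_pos.2
    (Fintype.piFinset_nonempty.2 fun _ ↦ Finset.card_pos.1 (hF ▸ Nat.succ_pos _))
  have hcount : grid.card * F.card ≤ 𝓓.card * grid.card := calc
    grid.card * F.card ≤ (∑ s ∈ 𝓓, (grid.filter (· ∈ s)).card) * F.card :=
      Nat.mul_le_mul_right _ ((Finset.card_le_card hcover).trans Finset.card_biUnion_le)
    _ = ∑ s ∈ 𝓓, (grid.filter (· ∈ s)).card * F.card := Finset.sum_mul ..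
    _ ≤ ∑ _s ∈ 𝓓, grid.card := Finset.sum_le_sum fun s hs ↦
      (Finset.mem_filter.1 hs).2.elim fun _ hi ↦ hi.card_filter_mul_card_le F
    _ = 𝓓.card * grid.card := by rw [Finset.sum_const, smul_eq_mul]
  rw [hF, mul_comm] at hcount
  exact (Nat.le_of_mul_le_mul_right hcount hgrid).not_gt 𝓓.card.lt_succ_self

theorem exists_infinite_subset_subsingleton_or_injOn {L : Set β} (hL : L.Infinite) (f : β → γ) :
    ∃ L' ⊆ L, L'.Infinite ∧ ((f '' L').Subsingleton ∨ Set.InjOn f L') := by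
  by_cases hfib : ∃ y, (L ∩ f ⁻¹' {y}).Infinite
  · obtain ⟨y, hy⟩ := hfib
    exact ⟨_, Set.inter_subset_left, hy,
      Or.inl (Set.subsingleton_singleton.anti (by rintro _ ⟨x, hx, rfl⟩; exact hx.2))⟩
  · push Not at hfib
    obtain ⟨L', hL', hbij⟩ := Set.exists_subset_bijOn L f
    refine ⟨L', hL', fun hfin ↦ hL ?_, Or.inr hbij.injOn⟩
    exact Set.Finite.of_finite_fibers f (hbij.image_eq ▸ hfin.image f) fun y _ ↦ hfib y

theorem exists_infinite_forall_subsingleton_or_injOn [Infinite β] {𝓕 : Set (β → γ)}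
    (h𝓕 : 𝓕.Finite) :
    ∃ L : Set β, L.Infinite ∧ ∀ f ∈ 𝓕, (f '' L).Subsingleton ∨ Set.InjOn f L := by
  induction 𝓕, h𝓕 using Set.Finite.induction_on with
  | empty => exact ⟨Set.univ, Set.infinite_univ, by simp⟩
  | @insert f 𝓕 _ _ ih =>
    obtain ⟨L, hL, h⟩ := ih
    obtain ⟨L', hL', hinf, hf⟩ := exists_infinite_subset_subsingleton_or_injOn hL f
    refine ⟨L', hinf, Set.forall_mem_insert.2 ⟨hf, fun f' hf' ↦ ?_⟩⟩
    exact (h f' hf').imp (·.anti (Set.image_mono hL')) (·.mono hL')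

end Avoidance

section TripleCode

/-- An encoding of triples `(a, e, b)` of two letters and a symbol by single letters which recovers
the symbol and the orientation of the pair `a, b`, and which dominates both letters in some
asymmetric relation. -/
structure TripleCode (ι F : Type*) where
  beats : ι → ι → Prop
  beats_asymm : ∀ a b, beats a b → ¬beats b a
  code : ι → F → ι → ι
  beats_left : ∀ a e b, beats (code a e b) a
  beats_right : ∀ a e b, beats (code a e b) b
  symbol_eq : ∀ a e b a' e' b', code a e b = code a' e' b' → e = e'
  code_swap_ne : ∀ a e b, a ≠ b → code a e b ≠ code b e a

theorem TripleCode.code_ne_left {ι F : Type*} (C : TripleCode ι F) (a : ι) (e : F)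
    (b : ι) : C.code a e b ≠ a := fun h ↦ by
  have hbeats := C.beats_left a e b
  rw [h] at hbeats
  exact C.beats_asymm _ _ hbeats hbeats

theorem TripleCode.code_ne_right {ι F : Type*} (C : TripleCode ι F) (a : ι) (e : F)
    (b : ι) : C.code a e b ≠ b := fun h ↦ by
  have hbeats := C.beats_right a e b
  rw [h] at hbeats
  exact C.beats_asymm _ _ hbeats hbeats

/-- The first coordinate carries the Paley tournament on `ZMod 7`, where `i` beats `j` if `i - j` is
a nonzero square; it is the smallest tournament in which any two vertices are both beaten by a
third. -/
theorem nonempty_tripleCode (F : Type*) : Nonempty (TripleCode (ZMod 7 × F × Bool) F) := by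
  classical
  let beats (i j : ZMod 7) : Prop := i - j ∈ ({1, 2, 4} : Finset (ZMod 7))
  have hasymm : ∀ i j, beats i j → ¬beats j i := by decide
  have hdom : ∀ i j, ∃ k, beats k i ∧ beats k j := by decide
  choose dom hleft hright using hdom
  refine ⟨⟨fun a b ↦ beats a.1 b.1, fun a b ↦ hasymm a.1 b.1,
    fun a e b ↦ (dom a.1 b.1, e, decide (WellOrderingRel a b)), fun a _ b ↦ hleft a.1 b.1,
    fun a _ b ↦ hright a.1 b.1, fun a e b a' e' b' h ↦ ?_, fun a e b hab h ↦ ?_⟩⟩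
  · exact congrArg (fun c ↦ c.2.1) h
  · have hiff : WellOrderingRel a b ↔ WellOrderingRel b a :=
      decide_eq_decide.1 (congrArg (fun c ↦ c.2.2) h)
    exact hab (Std.Trichotomous.trichotomous (r := WellOrderingRel) a b
      (fun h' ↦ asymm h' (hiff.1 h')) fun h' ↦ asymm h' (hiff.2 h'))

end TripleCode

section Generic

variable {G ι : Type*} [Group G]

/-- The word `r c * (r a)⁻¹ * e * r b`: left multiplication by `r c` moves the difference
`(r a)⁻¹ * e * r b` of two points of `range r` to a place named by the letter `c`. -/
def word (r : ι → G) (c a : ι) (e : G) (b : ι) : G :=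
  r c * (r a)⁻¹ * e * r b

theorem determinedAt_conj_word_eq {L : Set G} {c a a' : ι} (hca : c ≠ a) (haa' : a ≠ a') {e : G}
    (hinj : Set.InjOn (fun x ↦ x⁻¹ * e * x) L) (f : G) :
    DeterminedAt a {r : ι → G | (∀ i, r i ∈ L) ∧ word r c a e a = f * word r c a' e a'} := by
  rintro r ⟨hrL, hr⟩ r' ⟨hrL', hr'⟩ h
  refine hinj (hrL a) (hrL' a) ?_
  simp only [word, h c hca, h a' haa'.symm] at hr hr'
  rw [← hr'] at hr
  simpa [mul_assoc] using hr

variable [DecidableEq ι]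

/-- A family `r` of letters is generic over `E` if an `E`-coincidence between two words forces each
letter occurring just once on the left to occur on the right, and if coincidences between
conjugates by two different letters `a, a'` are trivial. -/
structure IsGeneric (E : Set G) (r : ι → G) : Prop where
  mem_of_count_eq_one : ∀ i c a b c' a' b', ∀ e ∈ E, ∀ e' ∈ E, ∀ f ∈ E,
    word r c a e b = f * word r c' a' e' b' → [c, a, b].count i = 1 → i ∈ [c', a', b']
  conj_eq_of_ne : ∀ c a a', ∀ e ∈ E, ∀ f ∈ E, c ≠ a → a ≠ a' →
    word r c a e a = f * word r c a' e a' → (r a)⁻¹ * e * r a = (r a')⁻¹ * e * r a'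

variable {E : Set G} {r : ι → G}

theorem determinedAt_word_eq {i c a b c' a' b' : ι} (hi : [c, a, b].count i = 1)
    (hi' : i ∉ [c', a', b']) (e e' f : G) :
    DeterminedAt i {r : ι → G | word r c a e b = f * word r c' a' e' b'} := by
  intro r hr r' hr' h
  simp only [List.mem_cons, List.not_mem_nil, or_false, not_or] at hi'
  obtain ⟨hc', ha', hb'⟩ := hi'
  have hw : word r c a e b = word r' c a e b := by
    rw [hr.out, hr'.out]
    simp only [word, h c' (Ne.symm hc'), h a' (Ne.symm ha'), h b' (Ne.symm hb')]
  simp only [word] at hw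
  by_cases hc : c = i <;> by_cases ha : a = i <;> by_cases hb : b = i <;>
    simp_all

theorem exists_isGeneric [Infinite G] [Finite ι] (hE : E.Finite) :
    ∃ r : ι → G, IsGeneric E r := by
  have := hE.to_subtype
  obtain ⟨L, hL, hconj⟩ := exists_infinite_forall_subsingleton_or_injOn
    (hE.image fun e x ↦ x⁻¹ * e * x)
  let coincidence : ι × ι × E × ι × E × ι × ι × E × ι → Set (ι → G) :=
    fun (c, a, e, b, f, c', a', e', b') ↦ {r | word r c a e b = f * word r c' a' e' b'}
  obtain ⟨r, hrL, hr⟩ := exists_forall_mem_and_forall_notMem_of_determinedAt hL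
    ((Set.finite_range coincidence).union
      (Set.finite_range fun p ↦ {r | (∀ i, r i ∈ L) ∧ r ∈ coincidence p}))
  refine ⟨r, fun i c a b c' a' b' e he e' he' f hf h hi ↦ ?_,
    fun c a a' e he f hf hca haa' h ↦ ?_⟩
  · by_contra hi'
    exact hr _ (Or.inl ⟨(c, a, ⟨e, he⟩, b, ⟨f, hf⟩, c', a', ⟨e', he'⟩, b'), rfl⟩)
      ⟨i, determinedAt_word_eq hi hi' e e' f⟩ h
  · rcases hconj _ ⟨e, he, rfl⟩ with hconst | hinj
    · exact hconst ⟨r a, hrL a, rfl⟩ ⟨r a', hrL a', rfl⟩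
    · exact absurd ⟨hrL, h⟩
        (hr _ (Or.inr ⟨(c, a, ⟨e, he⟩, a, ⟨f, hf⟩, c, a', ⟨e, he⟩, a'), rfl⟩)
          ⟨a, determinedAt_conj_word_eq hca haa' hinj f⟩)

theorem IsGeneric.isSeparated_range (hr : IsGeneric E r) (hE1 : 1 ∈ E) :
    IsSeparated E (Set.range r) := by
  rintro _ ⟨a, rfl⟩ _ ⟨b, rfl⟩ h
  by_contra hab
  have hne : a ≠ b := fun h' ↦ hab (congrArg r h')
  have hcount : word r a b 1 b = r a * (r b)⁻¹ * word r b b 1 b := by simp [word]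
  simpa [hne] using hr.mem_of_count_eq_one a a b b b b b 1 hE1 1 hE1 _ h hcount
    (by simp [hne.symm])

section Coded

variable (hr : IsGeneric E r) (hE : E⁻¹ = E) (C : TripleCode ι E) {a b a' b' : ι} {e e' : E}
  {f : G} (hf : f ∈ E)
  (h : word r (C.code a e b) a e b = f * word r (C.code a' e' b') a' e' b')

include hr hf h

theorem IsGeneric.beats_of_code_ne (hne : C.code a e b ≠ C.code a' e' b') :
    C.beats (C.code a' e' b') (C.code a e b) := by
  have hmem := hr.mem_of_count_eq_one (C.code a e b) _ _ _ _ _ _ e e.2 e' e'.2 f hf h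
    (by simp [(C.code_ne_left a e b).symm, (C.code_ne_right a e b).symm])
  simp only [List.mem_cons, hne, List.not_mem_nil, or_false, false_or] at hmem
  obtain h' | h' := hmem
  · exact h' ▸ C.beats_left a' e' b'
  · exact h' ▸ C.beats_right a' e' b'

theorem IsGeneric.mem_of_code_eq (hcode : C.code a e b = C.code a' e' b') (hab : a ≠ b) :
    (a = a' ∨ a = b') ∧ (b = a' ∨ b = b') := by
  have hmem := fun i ↦ hr.mem_of_count_eq_one i _ _ _ _ _ _ e e.2 e' e'.2 f hf h
  rw [← hcode] at hmem
  have ha := hmem a (by simp [C.code_ne_left, hab.symm])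
  have hb := hmem b (by simp [C.code_ne_right, hab])
  simpa [(C.code_ne_left a e b).symm, (C.code_ne_right a e b).symm] using And.intro ha hb

include hE

theorem IsGeneric.code_eq : C.code a e b = C.code a' e' b' := by
  by_contra hne
  have h' : word r (C.code a' e' b') a' e' b' = f⁻¹ * word r (C.code a e b) a e b := by
    rw [h, inv_mul_cancel_left]
  exact C.beats_asymm _ _ (hr.beats_of_code_ne C hf h hne)
    (hr.beats_of_code_ne C (hE ▸ Set.inv_mem_inv.2 hf) h' (Ne.symm hne))

theorem IsGeneric.word_code_eq :
    word r (C.code a e b) a e b = word r (C.code a' e' b') a' e' b' := by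
  have hcode := hr.code_eq hE C hf h
  obtain rfl := C.symbol_eq _ _ _ _ _ _ hcode
  by_cases hab : a = b <;> by_cases hab' : a' = b'
  · subst hab hab'
    obtain rfl | haa' := eq_or_ne a a'
    · rfl
    · rw [← hcode] at h ⊢
      have hconj := hr.conj_eq_of_ne _ a a' e e.2 f hf (C.code_ne_left a e a) haa' h
      simp only [word, mul_assoc] at hconj ⊢
      rw [hconj]
  · have h' : word r (C.code a' e b') a' e b' = f⁻¹ * word r (C.code a e b) a e b := by
      rw [h, inv_mul_cancel_left]
    have := hr.mem_of_code_eq C (hE ▸ Set.inv_mem_inv.2 hf) h' hcode.symm hab'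
    grind
  · have := hr.mem_of_code_eq C hf h hcode hab
    grind
  · have := hr.mem_of_code_eq C hf h hcode hab
    have := C.code_swap_ne a e b hab
    grind

end Coded

end Generic

/-- The combinatorial heart: the packing `T` has, for each difference `k` of two thickened points of
`R`, a point in `R * k`. Take `R` to be generic letters and `T` their coded words. -/
theorem exists_packing_translating_differences {G : Type*} [Group G] [Infinite G] {E : Set G}
    (hE : E.Finite) :
    ∃ R T, IsFinitePacking E R ∧ IsFinitePacking E T ∧
      ∀ k ∈ R⁻¹ * E * R, ∃ r ∈ R, r * k ∈ T := by
  classical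
  obtain ⟨E', hEE', hE'fin, hE'1, hE'⟩ := exists_finite_symmetric_superset hE
  have := hE'fin.to_subtype
  obtain ⟨C⟩ := nonempty_tripleCode E'
  obtain ⟨r, hr⟩ := exists_isGeneric (ι := ZMod 7 × E' × Bool) hE'fin
  let codedWord : (ZMod 7 × E' × Bool) × E' × (ZMod 7 × E' × Bool) → G :=
    fun (a, e, b) ↦ word r (C.code a e b) a e b
  have hnonempty : Nonempty E' := ⟨⟨1, hE'1⟩⟩
  refine ⟨Set.range r, Set.range codedWord,
    ⟨Set.finite_range r, Set.range_nonempty r, ?_⟩,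
    ⟨Set.finite_range codedWord, Set.range_nonempty codedWord, ?_⟩, ?_⟩
  · exact (hr.isSeparated_range hE'1).anti hEE'
  · rintro _ ⟨⟨a, e, b⟩, rfl⟩ _ ⟨⟨a', e', b'⟩, rfl⟩ hf
    exact hr.word_code_eq hE' C (hEE' hf) (inv_mul_cancel_right _ _).symm
  · rintro _ ⟨_, ⟨_, ⟨a, ha⟩, e, he, rfl⟩, _, ⟨b, rfl⟩, rfl⟩
    refine ⟨_, ⟨C.code a ⟨e, hEE' he⟩ b, rfl⟩, (a, ⟨e, hEE' he⟩, b), ?_⟩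
    simp only [codedWord, word, ha, inv_inv, mul_assoc]

/-- Replacing `Q` by `Q * T` and one of the sets `B i` by `Q * R`, with `R` and `T` as in
`exists_packing_translating_differences`, puts one more index under control. -/
theorem exists_packings_meeting_nets {G ι : Type*} [Group G] [Infinite G] {E : Set G}
    (hE : E.Finite) (I : Finset ι) :
    ∃ (B : ι → Set G) (Q : Set G), (∀ i, IsFinitePacking E (B i)) ∧ IsFinitePacking E Q ∧
      ∀ S : ι → Set G, (∀ i ∈ I, IsNet ((B i)⁻¹ * E * B i) (S i)) →
        ∃ q ∈ Q, ∀ i ∈ I, q ∈ B i * S i := by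
  classical
  induction I using Finset.induction_on with
  | empty =>
    exact ⟨fun _ ↦ 1, 1, fun _ ↦ isFinitePacking_one E, isFinitePacking_one E, by simp⟩
  | insert i I hi ih =>
    obtain ⟨B, Q, hB, hQ, hmeet⟩ := ih
    obtain ⟨R, T, hR, hT, hRT⟩ := exists_packing_translating_differences
      ((hQ.finite.inv.mul hE).mul hQ.finite)
    refine ⟨Function.update B i (Q * R), Q * T, fun j ↦ ?_, hQ.mul hT, fun S hS ↦ ?_⟩
    · obtain rfl | hj := eq_or_ne j i
      · simpa using hQ.mul hR
      · simpa [hj] using hB j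
    have hSi : IsNet ((Q * R)⁻¹ * E * (Q * R)) (S i) := by
      simpa using hS i (Finset.mem_insert_self i I)
    obtain ⟨s, hs, hk⟩ := hSi.exists_mem 1
    obtain ⟨r, hr, ht⟩ := hRT s (by simpa [mul_assoc] using hk)
    have hne : ∀ j ∈ I, j ≠ i := fun j hj hji ↦ hi (hji ▸ hj)
    obtain ⟨q, hq, hqB⟩ := hmeet (fun j ↦ {h | h * (r * s) ∈ S j}) fun j hj ↦ by
      simpa [hne j hj] using (hS j (Finset.mem_insert_of_mem hj)).translate (r * s)
    refine ⟨q * (r * s), Set.mul_mem_mul hq ht, Finset.forall_mem_insert _ _ _ |>.2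
      ⟨?_, fun j hj ↦ ?_⟩⟩
    · simpa [mul_assoc] using Set.mul_mem_mul (Set.mul_mem_mul hq hr) hs
    · obtain ⟨b, hb, h, hh, rfl⟩ := hqB j hj
      simpa [hne j hj, mul_assoc] using Set.mul_mem_mul hb hh.out

section Config

/-- Configurations: the space on which `G` acts by the shift. The row `γ` of a configuration `x` is
the three-colouring `h ↦ x h γ` of `G`. -/
abbrev Config (G : Type*) := G → G → Fin 3

variable {G : Type*} [Group G]

theorem shift_apply {A : Type*} (g : G) (x : G → A) (h : G) : (g • x) h = x (h * g) := rfl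

instance continuousConstSMul_shift {A : Type*} [TopologicalSpace A] :
    ContinuousConstSMul G (G → A) :=
  ⟨fun g ↦ continuous_pi fun h ↦ continuous_apply (h * g)⟩

variable (G) in
/-- The configurations whose row `γ` properly colours the edges from `h` to `γ * h`, for all
`γ ≠ 1`. The value of row `γ` at `1` witnesses that `γ` fixes no such configuration. -/
def properConfigs : Set (Config G) :=
  {x | ∀ γ ≠ 1, ∀ h, x (γ * h) γ ≠ x h γ}

theorem isClosed_properConfigs : IsClosed (properConfigs G) := by
  simp only [properConfigs, Set.ofPred_forall]
  refine isClosed_iInter fun γ ↦ isClosed_iInter fun _ ↦ isClosed_iInter fun h ↦ ?_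
  exact (isClosed_discrete {v : Fin 3 × Fin 3 | v.1 ≠ v.2}).preimage
    (f := fun x : Config G ↦ (x (γ * h) γ, x h γ)) (by fun_prop)

theorem smul_mem_properConfigs (g : G) {x : Config G} (hx : x ∈ properConfigs G) :
    g • x ∈ properConfigs G := fun γ hγ h ↦ by
  simpa only [shift_apply, mul_assoc] using hx γ hγ (h * g)

theorem eq_one_of_smul_eq_self {g : G} {x : Config G} (hx : x ∈ properConfigs G)
    (h : g • x = x) : g = 1 := by
  by_contra hg
  exact hx g hg 1 (by simpa [shift_apply] using congrFun (congrFun h 1) g)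

/-- The graph on `G` with edges from `h` to `γ * h`. -/
def rowGraph (γ : G) : SimpleGraph G :=
  SimpleGraph.fromRel fun h h' ↦ h' = γ * h

theorem encard_neighborSet_rowGraph_lt (γ h : G) :
    ((rowGraph γ).neighborSet h).encard < ENat.card (Fin 3) := by
  have hsub : (rowGraph γ).neighborSet h ⊆ {γ * h, γ⁻¹ * h} := by
    rintro h' ⟨-, rfl | h⟩
    · exact Or.inl rfl
    · exact Or.inr (eq_inv_mul_iff_mul_eq.2 h.symm)
  calc ((rowGraph γ).neighborSet h).encard
      ≤ ({γ * h, γ⁻¹ * h} : Set G).encard := Set.encard_le_encard hsub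
    _ ≤ ({γ⁻¹ * h} : Set G).encard + 1 := Set.encard_insert_le _ _
    _ < ENat.card (Fin 3) := by
      rw [Set.encard_singleton, ENat.card_eq_coe_fintype_card, Fintype.card_fin]
      norm_num

/-- A family of requests `(a, x)`, each asking for the values of the configuration `x` near `a`, is
`D`-sparse if places whose quotient is in `D` carry the same configuration. -/
def IsSparse (D : Set G) (P : Set (G × Config G)) : Prop :=
  ∀ p ∈ P, ∀ q ∈ P, p.1 * q.1⁻¹ ∈ D → p.2 = q.2

theorem IsSparse.anti {D D' : Set G} {P : Set (G × Config G)} (hP : IsSparse D' P) (hD : D ⊆ D') :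
    IsSparse D P :=
  fun p hp q hq h ↦ hP p hp q hq (hD h)

theorem exists_row_extending {γ : G} {D : Set G} (hD1 : 1 ∈ D) (hDγ : γ ∈ D)
    {P : Set (G × Config G)} (hP : ∀ p ∈ P, p.2 ∈ properConfigs G) (hsparse : IsSparse D P) :
    ∃ c : G → Fin 3, (γ ≠ 1 → ∀ h, c (γ * h) ≠ c h) ∧ ∀ p ∈ P, c p.1 = p.2 p.1 γ := by
  have hedge : ∀ p ∈ P, ∀ q ∈ P, p.1 ≠ q.1 → q.1 = γ * p.1 → p.2 p.1 γ ≠ q.2 q.1 γ := by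
    intro p hp q hq hne hpq
    rw [hsparse q hq p hp (by simpa [hpq] using hDγ), hpq]
    exact (hP p hp γ (fun hγ ↦ hne (by simp [hpq, hγ])) p.1).symm
  have hindep : (rowGraph γ □ (⊤ : SimpleGraph (Fin 3))).IsIndepSet
      ((fun p : G × Config G ↦ (p.1, p.2 p.1 γ)) '' P) := by
    rintro _ ⟨p, hp, rfl⟩ _ ⟨q, hq, rfl⟩ -
    rw [SimpleGraph.boxProd_adj]
    rintro (⟨⟨hne, hpq | hqp⟩, heq⟩ | ⟨hne, hpq⟩)
    · exact hedge p hp q hq hne hpq heq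
    · exact hedge q hq p hp hne.symm hqp heq.symm
    · dsimp only at hpq hne
      exact hne (by rw [hsparse p hp q hq (by simpa [hpq] using hD1), hpq])
  obtain ⟨c, hc⟩ := exists_coloring_extending _ hindep (encard_neighborSet_rowGraph_lt γ)
  refine ⟨c, fun hγ h ↦ (c.valid (v := h) (w := γ * h) ?_).symm, fun p hp ↦ hc _ ⟨p, hp, rfl⟩⟩
  exact ⟨by simpa using hγ, Or.inl rfl⟩

end Config

section Flexible

variable {G : Type*} [Group G]

/-- Every `D`-sparse family of requests from `X`, restricted to the rows in `J`, is realized by a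
single member of `X`. -/
def IsGluable (J D : Set G) (X : Set (Config G)) : Prop :=
  ∀ P : Set (G × Config G), (∀ p ∈ P, p.2 ∈ X) → IsSparse D P →
    ∃ z ∈ X, ∀ p ∈ P, Set.EqOn (z p.1) (p.2 p.1) J

theorem IsGluable.mono {J D D' : Set G} {X : Set (Config G)} (hX : IsGluable J D X)
    (hD : D ⊆ D') : IsGluable J D' X :=
  fun P hP hsparse ↦ hX P hP (hsparse.anti hD)

/-- A subshift `X` of proper configurations which only constrains the rows in `J` and in which
sufficiently sparse requests can be glued; this is the property preserved by the construction. -/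
structure IsFlexibleAt (J : Set G) (X : Set (Config G)) : Prop where
  isClosed : IsClosed X
  smul_mem : ∀ g : G, ∀ x ∈ X, g • x ∈ X
  subset_properConfigs : X ⊆ properConfigs G
  mem_of_eqOn : ∀ x ∈ X, ∀ y ∈ properConfigs G, (∀ h, Set.EqOn (y h) (x h) J) → y ∈ X
  exists_isGluable : ∃ D : Set G, D.Finite ∧ IsGluable J D X

theorem properConfigs_nonempty : (properConfigs G).Nonempty := by
  choose c hc using fun γ : G ↦ exists_row_extending (γ := γ) (D := Set.univ) (P := ∅)
    trivial trivial (by simp) (by simp [IsSparse])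
  exact ⟨fun h γ ↦ c γ h, fun γ ↦ (hc γ).1⟩

theorem isFlexibleAt_empty_properConfigs : IsFlexibleAt ∅ (properConfigs G) where
  isClosed := isClosed_properConfigs
  smul_mem g _ := smul_mem_properConfigs g
  subset_properConfigs := subset_rfl
  mem_of_eqOn _ _ _ hy _ := hy
  exists_isGluable := ⟨∅, Set.finite_empty, fun _ _ _ ↦
    properConfigs_nonempty.imp fun _ hz ↦ ⟨hz, fun _ _ ↦ Set.eqOn_empty _ _⟩⟩

theorem IsFlexibleAt.nonempty {J : Set G} {X : Set (Config G)} (hX : IsFlexibleAt J X) :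
    X.Nonempty := by
  obtain ⟨D, -, hD⟩ := hX.exists_isGluable
  obtain ⟨z, hz, -⟩ := hD ∅ (by simp) (by simp [IsSparse])
  exact ⟨z, hz⟩

/-- Rows outside `J` are free, so requests there are met by extending partial colourings. -/
theorem IsFlexibleAt.mono {J J' : Set G} {X : Set (Config G)} (hX : IsFlexibleAt J X)
    (hJ : J ⊆ J') (hJ' : J'.Finite) : IsFlexibleAt J' X where
  isClosed := hX.isClosed
  smul_mem := hX.smul_mem
  subset_properConfigs := hX.subset_properConfigs
  mem_of_eqOn x hx y hy h := hX.mem_of_eqOn x hx y hy fun g ↦ (h g).mono hJ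
  exists_isGluable := by
    obtain ⟨D, hD, hglue⟩ := hX.exists_isGluable
    refine ⟨D ∪ insert 1 J', hD.union (hJ'.insert 1), fun P hPX hP ↦ ?_⟩
    obtain ⟨z, hzX, hz⟩ := hglue P hPX (hP.anti Set.subset_union_left)
    have hrow : ∀ γ, ∃ c : G → Fin 3, (γ ≠ 1 → ∀ h, c (γ * h) ≠ c h) ∧
        (γ ∈ J → ∀ h, c h = z h γ) ∧ (γ ∈ J' → ∀ p ∈ P, c p.1 = p.2 p.1 γ) := by
      intro γ
      by_cases hγ : γ ∈ J' \ J
      · obtain ⟨c, hproper, hc⟩ := exists_row_extending (γ := γ) (Or.inl rfl) (Or.inr hγ.1)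
          (fun p hp ↦ hX.subset_properConfigs (hPX p hp)) (hP.anti Set.subset_union_right)
        exact ⟨c, hproper, fun h ↦ absurd h hγ.2, fun _ ↦ hc⟩
      · refine ⟨fun h ↦ z h γ, hX.subset_properConfigs hzX γ, fun _ _ ↦ rfl, fun hγ' p hp ↦ ?_⟩
        exact hz p hp (by_contra fun h ↦ hγ ⟨hγ', h⟩)
    choose c hproper hcz hcP using hrow
    exact ⟨fun h γ ↦ c γ h, hX.mem_of_eqOn z hzX _ hproper fun h γ hγ ↦ hcz γ hγ h,
      fun p hp γ hγ ↦ hcP γ hγ p hp⟩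

end Flexible

section Planted

variable {G : Type*} [Group G] {J D E W B M : Set G} {X : Set (Config G)} {p : Config G}

/-- The configurations in `X` which, for some `M`-net `S`, show the pattern of `p` in the window
`W × J` at all places in `B * S`. -/
def planted (X : Set (Config G)) (J W B M : Set G) (p : Config G) : Set (Config G) :=
  {x ∈ X | ∃ S, IsNet M S ∧ ∀ t ∈ B * S, ∀ w ∈ W, Set.EqOn ((t • x) w) (p w) J}

theorem isClosed_setOf_isNet (hM : M.Finite) :
    IsClosed {σ : G → Bool | IsNet M {g | σ g = true}} := by
  have hset : {σ : G → Bool | IsNet M {g | σ g = true}} =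
      (⋂ (b : G) (b' : G) (_ : b * b'⁻¹ ∈ M) (_ : b ≠ b'), {σ | ¬(σ b = true ∧ σ b' = true)}) ∩
        ⋂ g : G, ⋃ m ∈ M, {σ | σ (m * g) = true} := by
    ext σ
    simp only [Set.mem_ofPred_eq, Set.mem_inter_iff, Set.mem_iInter, Set.mem_iUnion, exists_prop]
    refine ⟨fun h ↦ ⟨fun b b' hM hne hσ ↦ hne (h.isSeparated b hσ.1 b' hσ.2 hM), fun g ↦ ?_⟩,
      fun h ↦ ⟨fun b hb b' hb' hM ↦ by_contra fun hne ↦ h.1 b b' hM hne ⟨hb, hb'⟩, fun g ↦ ?_⟩⟩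
    · obtain ⟨s, hs, hsM⟩ := h.exists_mem g
      exact ⟨_, hsM, by simpa using hs⟩
    · obtain ⟨m, hm, hσ⟩ := h.2 g
      exact ⟨m * g, hσ, by simpa using hm⟩
  rw [hset]
  refine IsClosed.inter ?_ (isClosed_iInter fun g ↦ hM.isClosed_biUnion fun m _ ↦ ?_)
  · refine isClosed_iInter fun b ↦ isClosed_iInter fun b' ↦ isClosed_iInter fun _ ↦
      isClosed_iInter fun _ ↦ ?_
    exact (isClosed_discrete {v : Bool × Bool | ¬(v.1 = true ∧ v.2 = true)}).preimage
      (f := fun σ : G → Bool ↦ (σ b, σ b')) (by fun_prop)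
  · exact isClosed_singleton.preimage (continuous_apply (m * g))

/-- The net is a point of a compact space, and may be projected away. -/
theorem isClosed_planted (hX : IsClosed X) (hM : M.Finite) : IsClosed (planted X J W B M p) := by
  let Z : Set (Config G × (G → Bool)) := {q | q.1 ∈ X ∧ IsNet M {g | q.2 g = true} ∧
    ∀ b ∈ B, ∀ s, ∀ w ∈ W, ∀ γ ∈ J, q.2 s = true → q.1 (w * (b * s)) γ = p w γ}
  have hZ : IsClosed Z := by
    simp only [Z, Set.ofPred_and, Set.ofPred_forall]
    refine (hX.preimage continuous_fst).inter
      (((isClosed_setOf_isNet hM).preimage continuous_snd).inter ?_)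
    refine isClosed_iInter fun b ↦ isClosed_iInter fun _ ↦ isClosed_iInter fun s ↦
      isClosed_iInter fun w ↦ isClosed_iInter fun _ ↦ isClosed_iInter fun γ ↦
      isClosed_iInter fun _ ↦ ?_
    exact (isClosed_discrete {v : Bool × Fin 3 | v.1 = true → v.2 = p w γ}).preimage
      (f := fun q : Config G × (G → Bool) ↦ (q.2 s, q.1 (w * (b * s)) γ)) (by fun_prop)
  have himage : planted X J W B M p = Prod.fst '' Z := by
    ext x
    constructor
    · classical
      rintro ⟨hx, S, hS, hpat⟩
      refine ⟨(x, fun g ↦ decide (g ∈ S)), ⟨hx, by simpa using hS, ?_⟩, rfl⟩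
      intro b hb s w hw γ hγ hs
      exact hpat _ (Set.mul_mem_mul hb (of_decide_eq_true hs)) w hw hγ
    · rintro ⟨⟨x, σ⟩, ⟨hx, hS, hpat⟩, rfl⟩
      refine ⟨hx, _, hS, ?_⟩
      rintro _ ⟨b, hb, s, hs, rfl⟩ w hw γ hγ
      exact hpat b hb s w hw γ hγ hs
  rw [himage]
  exact isClosedMap_fst_of_compactSpace _ hZ

/-- At a place of `T` near a request, the configuration of that request is asked for once more;
at the other places of `T`, the pattern of `p` is. -/
theorem IsGluable.exists_showing (hX : IsGluable J D X) (hD : D⁻¹ = D) {T : Set G}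
    (hT : IsSeparated (W⁻¹ * D * W) T)
    (hp : ∀ g : G, g • p ∈ X) {P : Set (G × Config G)} (hPX : ∀ q ∈ P, q.2 ∈ X)
    (hPD : IsSparse D P) (hPN : IsSparse ((W⁻¹ * D)⁻¹ * (W⁻¹ * D)) P)
    (hPp : ∀ q ∈ P, ∀ t ∈ T, t * q.1⁻¹ ∈ W⁻¹ * D →
      ∀ w ∈ W, Set.EqOn ((t • q.2) w) (p w) J) :
    ∃ z ∈ X, (∀ q ∈ P, Set.EqOn (z q.1) (q.2 q.1) J) ∧
      ∀ t ∈ T, ∀ w ∈ W, Set.EqOn ((t • z) w) (p w) J := by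
  have hasked : ∀ t ∈ T, ∃ x ∈ X, (∀ q ∈ P, t * q.1⁻¹ ∈ W⁻¹ * D → q.2 = x) ∧
      ∀ w ∈ W, Set.EqOn ((t • x) w) (p w) J := by
    intro t ht
    by_cases hnear : ∃ q ∈ P, t * q.1⁻¹ ∈ W⁻¹ * D
    · obtain ⟨q, hq, hqt⟩ := hnear
      exact ⟨q.2, hPX q hq, fun q' hq' hqt' ↦ hPN q' hq' q hq
        (Set.mem_mul.2 ⟨_, Set.inv_mem_inv.2 hqt', _, hqt, by group⟩), hPp q hq t ht hqt⟩
    · exact ⟨t⁻¹ • p, hp t⁻¹, fun q hq hqt ↦ absurd ⟨q, hq, hqt⟩ hnear,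
        fun w _ γ _ ↦ by rw [smul_inv_smul]⟩
  choose! asked haskedX hasked_near hasked_eqOn using hasked
  let P' : Set (G × Config G) := P ∪ {q | ∃ t ∈ T, ∃ w ∈ W, (w * t, asked t) = q}
  have hmixed : ∀ q ∈ P, ∀ t ∈ T, ∀ w ∈ W, w * t * q.1⁻¹ ∈ D → q.2 = asked t :=
    fun q hq t ht w hw h ↦ hasked_near t ht q hq
      (Set.mem_mul.2 ⟨_, Set.inv_mem_inv.2 hw, _, h, by group⟩)
  have hP'X : ∀ q ∈ P', q.2 ∈ X := by
    rintro _ (hq | ⟨t, ht, w, -, rfl⟩)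
    · exact hPX _ hq
    · exact haskedX t ht
  have hP' : IsSparse D P' := by
    rintro q (hq | ⟨t, ht, w, hw, rfl⟩) q' (hq' | ⟨t', ht', w', hw', rfl⟩) h
    · exact hPD q hq q' hq' h
    · exact hmixed q hq t' ht' w' hw' (hD ▸ by simpa [mul_assoc] using h)
    · exact (hmixed q' hq' t ht w hw h).symm
    · exact congrArg asked (hT t ht t' ht' (Set.mem_mul.2 ⟨_, Set.mul_mem_mul
        (Set.inv_mem_inv.2 hw) h, _, hw', by group⟩))
  obtain ⟨z, hzX, hz⟩ := hX P' hP'X hP'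
  exact ⟨z, hzX, fun q hq ↦ hz q (Or.inl hq), fun t ht w hw ↦
    (hz _ (Or.inr ⟨t, ht, w, hw, rfl⟩)).trans (hasked_eqOn t ht w hw)⟩

theorem IsGluable.exists_isGluable_planted (hX : IsGluable J D X) (hD : D⁻¹ = D) (hE1 : 1 ∈ E)
    (hE : E⁻¹ = E) (hWE : W⁻¹ * D * W ⊆ E) (hB : IsFinitePacking E B) (hp : ∀ g : G, g • p ∈ X)
    (hDfin : D.Finite) (hEfin : E.Finite) (hW : W.Finite) :
    ∃ D' : Set G, D'.Finite ∧ IsGluable J D' (planted X J W B (B⁻¹ * E * B) p) := by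
  let M : Set G := B⁻¹ * E * B
  let N : Set G := W⁻¹ * D
  let L : Set G := B⁻¹ * N
  have hMfin : M.Finite := (hB.finite.inv.mul hEfin).mul hB.finite
  have hNfin : N.Finite := hW.inv.mul hDfin
  have hLfin : L.Finite := hB.finite.inv.mul hNfin
  have hM1 : 1 ∈ M := by
    obtain ⟨b, hb⟩ := hB.nonempty
    exact Set.mem_mul.2 ⟨_, Set.mul_mem_mul (Set.inv_mem_inv.2 hb) hE1, b, hb, by group⟩
  have hMinv : M⁻¹ = M := by simp [M, hE, mul_assoc]
  refine ⟨D ∪ N⁻¹ * N ∪ (M * L)⁻¹ * M * (M * L), (hDfin.union (hNfin.inv.mul hNfin)).union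
    (((hMfin.mul hLfin).inv.mul hMfin).mul (hMfin.mul hLfin)), fun P hP hsparse ↦ ?_⟩
  choose! net hnet hnet_eqOn using fun x (hx : x ∈ planted X J W B M p) ↦ hx.2
  obtain ⟨S, hS, hSP⟩ := exists_isNet_glue (L := L) hM1 hMinv
    (P := (fun q ↦ (q.1, net q.2)) '' P)
    (by rintro _ ⟨q, hq, rfl⟩; exact hnet _ (hP q hq))
    (by
      rintro _ ⟨q, hq, rfl⟩ _ ⟨q', hq', rfl⟩ h
      exact congrArg net (hsparse q hq q' hq' (Or.inr h)))
  have hT : IsSeparated E (B * S) := hB.isSeparated.mul hS.isSeparated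
  obtain ⟨z, hzX, hzP, hzp⟩ := hX.exists_showing hD (hT.anti hWE) hp
    (fun q hq ↦ (hP q hq).1) (hsparse.anti fun _ h ↦ Or.inl (Or.inl h))
    (hsparse.anti fun _ h ↦ Or.inl (Or.inr h)) (by
      rintro q hq _ ⟨b, hb, s, hs, rfl⟩ hN
      have hsL : s * q.1⁻¹ ∈ L :=
        Set.mem_mul.2 ⟨_, Set.inv_mem_inv.2 hb, _, hN, by group⟩
      exact hnet_eqOn _ (hP q hq) _ (Set.mul_mem_mul hb (hSP _ ⟨q, hq, rfl⟩ s hs hsL)))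
  exact ⟨z, ⟨hzX, S, hS, hzp⟩, hzP⟩

theorem IsFlexibleAt.planted (hX : IsFlexibleAt J X) (hglue : IsGluable J D X) (hD : D⁻¹ = D)
    (hE1 : 1 ∈ E) (hE : E⁻¹ = E) (hWE : W⁻¹ * D * W ⊆ E) (hB : IsFinitePacking E B) (hp : p ∈ X)
    (hDfin : D.Finite) (hEfin : E.Finite) (hW : W.Finite) :
    IsFlexibleAt J (planted X J W B (B⁻¹ * E * B) p) where
  isClosed := isClosed_planted hX.isClosed ((hB.finite.inv.mul hEfin).mul hB.finite)
  smul_mem := by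
    rintro g x ⟨hx, S, hS, hpat⟩
    refine ⟨hX.smul_mem g x hx, _, hS.translate g, ?_⟩
    rintro _ ⟨b, hb, s, hs, rfl⟩
    simpa only [smul_smul, mul_assoc] using hpat _ (Set.mul_mem_mul hb hs.out)
  subset_properConfigs _ hx := hX.subset_properConfigs hx.1
  mem_of_eqOn := by
    rintro x ⟨hx, S, hS, hpat⟩ y hy hxy
    exact ⟨hX.mem_of_eqOn x hx y hy hxy, S, hS, fun t ht w hw ↦
      (hxy (w * t)).trans (hpat t ht w hw)⟩
  exists_isGluable := hglue.exists_isGluable_planted hD hE1 hE hWE hB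
    (fun g ↦ hX.smul_mem g p hp) hDfin hEfin hW

end Planted

section JointMinimality

variable {G : Type*} [Group G]

/-- A subshift which is flexible at some finite set of rows. -/
def IsFlexible (X : Set (Config G)) : Prop :=
  ∃ J : Set G, J.Finite ∧ IsFlexibleAt J X

variable {ι : Type*}

/-- Any point of `∏ i, X i` can be shifted so as to look like any other one in the window
`W × W`, simultaneously in all coordinates. -/
def IsJointlyMinimalOn (W : Set G) (X : ι → Set (Config G)) : Prop :=
  ∀ u y : ι → Config G, (∀ i, u i ∈ X i) → (∀ i, y i ∈ X i) →
    ∃ g : G, ∀ i, ∀ w ∈ W, Set.EqOn ((g • y i) w) (u i w) W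

variable {W : Set G} {X : ι → Set (Config G)}

theorem IsJointlyMinimalOn.anti (hX : IsJointlyMinimalOn W X) {V : Set G} (hV : V ⊆ W)
    {Y : ι → Set (Config G)} (hY : ∀ i, Y i ⊆ X i) : IsJointlyMinimalOn V Y := by
  intro u y hu hy
  obtain ⟨g, hg⟩ := hX u y (fun i ↦ hY i (hu i)) fun i ↦ hY i (hy i)
  exact ⟨g, fun i w hw ↦ (hg i w (hV hw)).mono hV⟩

theorem IsJointlyMinimalOn.comp_injective (hX : IsJointlyMinimalOn W X) (hne : ∀ i, (X i).Nonempty)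
    {κ : Type*} {f : κ → ι} (hf : Function.Injective f) : IsJointlyMinimalOn W fun k ↦ X (f k) := by
  classical
  choose x₀ hx₀ using hne
  have hext : ∀ u : κ → Config G, (∀ k, u k ∈ X (f k)) → ∀ i, Function.extend f u x₀ i ∈ X i := by
    intro u hu i
    by_cases hi : ∃ k, f k = i
    · obtain ⟨k, rfl⟩ := hi
      simpa [hf.extend_apply] using hu k
    · simpa [Function.extend_apply' _ _ _ hi] using hx₀ i
  intro u y hu hy
  obtain ⟨g, hg⟩ := hX _ _ (hext u hu) (hext y hy)
  exact ⟨g, fun k ↦ by simpa [hf.extend_apply] using hg (f k)⟩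

variable [Infinite G] [Finite ι]

theorem exists_isFlexible_subset_forall_exists_eqOn (hX : ∀ i, IsFlexible (X i)) (hW : W.Finite)
    {u : ι → Config G} (hu : ∀ i, u i ∈ X i) :
    ∃ X' : ι → Set (Config G), (∀ i, IsFlexible (X' i)) ∧ (∀ i, X' i ⊆ X i) ∧
      ∀ y : ι → Config G, (∀ i, y i ∈ X' i) →
        ∃ g : G, ∀ i, ∀ w ∈ W, Set.EqOn ((g • y i) w) (u i w) W := by
  have := Fintype.ofFinite ι
  choose J₀ hJ₀ hXJ₀ using hX
  let J : Set G := (⋃ i, J₀ i) ∪ W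
  have hJ : J.Finite := (Set.finite_iUnion hJ₀).union hW
  have hXJ : ∀ i, IsFlexibleAt J (X i) := fun i ↦
    (hXJ₀ i).mono (Set.subset_union_of_subset_left (Set.subset_iUnion J₀ i) W) hJ
  choose D₀ hD₀ hglue using fun i ↦ (hXJ i).exists_isGluable
  obtain ⟨D, hD₀D, hDfin, -, hD⟩ := exists_finite_symmetric_superset (Set.finite_iUnion hD₀)
  obtain ⟨E, hWE, hEfin, hE1, hE⟩ :=
    exists_finite_symmetric_superset ((hW.inv.mul hDfin).mul hW)
  obtain ⟨B, Q, hB, -, hmeet⟩ := exists_packings_meeting_nets hEfin (Finset.univ : Finset ι)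
  refine ⟨fun i ↦ planted (X i) J W (B i) ((B i)⁻¹ * E * B i) (u i), fun i ↦ ⟨J, hJ, ?_⟩,
    fun i x hx ↦ hx.1, fun y hy ↦ ?_⟩
  · exact (hXJ i).planted ((hglue i).mono ((Set.subset_iUnion D₀ i).trans hD₀D)) hD hE1 hE hWE
      (hB i) (hu i) hDfin hEfin hW
  · choose S hS hpat using fun i ↦ (hy i).2
    obtain ⟨q, -, hq⟩ := hmeet S fun i _ ↦ hS i
    exact ⟨q, fun i w hw ↦
      (hpat i q (hq i (Finset.mem_univ i)) w hw).mono Set.subset_union_right⟩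

/-- Only finitely many patterns are visible in `W × W`; they are treated one after the other. -/
theorem exists_isFlexible_subset_isJointlyMinimalOn (hX : ∀ i, IsFlexible (X i))
    (hW : W.Finite) :
    ∃ X' : ι → Set (Config G), (∀ i, IsFlexible (X' i)) ∧ (∀ i, X' i ⊆ X i) ∧
      IsJointlyMinimalOn W X' := by
  have := hW.to_subtype
  let pattern (u : ι → Config G) : ι → W → W → Fin 3 := fun i w γ ↦ u i w γ
  suffices ∀ 𝓟 : Set (ι → W → W → Fin 3), ∃ X' : ι → Set (Config G),
      (∀ i, IsFlexible (X' i)) ∧ (∀ i, X' i ⊆ X i) ∧ ∀ u y : ι → Config G, pattern u ∈ 𝓟 →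
        (∀ i, u i ∈ X' i) → (∀ i, y i ∈ X' i) →
          ∃ g : G, ∀ i, ∀ w ∈ W, Set.EqOn ((g • y i) w) (u i w) W by
    obtain ⟨X', hX', hsub, hmin⟩ := this Set.univ
    exact ⟨X', hX', hsub, fun u y ↦ hmin u y trivial⟩
  intro 𝓟
  induction 𝓟, 𝓟.toFinite using Set.Finite.induction_on with
  | empty => exact ⟨X, hX, fun _ ↦ subset_rfl, by simp⟩
  | @insert π 𝓟 _ _ ih =>
    obtain ⟨X₁, hX₁, hsub₁, hmin₁⟩ := ih
    by_cases hπ : ∃ u₀ : ι → Config G, (∀ i, u₀ i ∈ X₁ i) ∧ pattern u₀ = π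
    · obtain ⟨u₀, hu₀, rfl⟩ := hπ
      obtain ⟨X₂, hX₂, hsub₂, hshow⟩ := exists_isFlexible_subset_forall_exists_eqOn hX₁ hW hu₀
      refine ⟨X₂, hX₂, fun i ↦ (hsub₂ i).trans (hsub₁ i), fun u y hu𝓟 hu hy ↦ ?_⟩
      rcases hu𝓟 with hpat | hu𝓟
      · obtain ⟨g, hg⟩ := hshow y hy
        refine ⟨g, fun i w hw γ hγ ↦ (hg i w hw hγ).trans ?_⟩
        exact (congrFun (congrFun (congrFun hpat i) ⟨w, hw⟩) ⟨γ, hγ⟩).symm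
      · exact hmin₁ u y hu𝓟 (fun i ↦ hsub₂ i (hu i)) fun i ↦ hsub₂ i (hy i)
    · refine ⟨X₁, hX₁, hsub₁, fun u y hu𝓟 hu hy ↦ ?_⟩
      exact hmin₁ u y (hu𝓟.resolve_left fun hpat ↦ hπ ⟨u, hu, hpat⟩) hu hy

end JointMinimality

section Tree

variable {G : Type*} [Group G] [Infinite G]

/-- Level `n` carries one subshift for each subset of `Fin n`, which splits into the two subshifts
of level `n + 1` whose indices restrict to it. -/
theorem exists_tree_isFlexible_isJointlyMinimalOn (W : ℕ → Finset G) :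
    ∃ X : ∀ n, Set (Fin n) → Set (Config G), (∀ n i, IsFlexible (X n i)) ∧
      (∀ n i, X (n + 1) i ⊆ X n (Fin.castSucc ⁻¹' i)) ∧
      ∀ n, IsJointlyMinimalOn (W n) (X (n + 1)) := by
  choose next hflex hsub hmin using fun (n : ℕ)
      (X : {X : Set (Fin n) → Set (Config G) // ∀ i, IsFlexible (X i)}) ↦
    exists_isFlexible_subset_isJointlyMinimalOn
      (fun i : Set (Fin (n + 1)) ↦ X.2 (Fin.castSucc ⁻¹' i)) (W n).finite_toSet
  let X : ∀ n, {X : Set (Fin n) → Set (Config G) // ∀ i, IsFlexible (X i)} := fun n ↦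
    n.rec ⟨fun _ ↦ properConfigs G, fun _ ↦
      ⟨∅, Set.finite_empty, isFlexibleAt_empty_properConfigs⟩⟩
      fun n X ↦ ⟨next n X, hflex n X⟩
  exact ⟨fun n ↦ (X n).1, fun n ↦ (X n).2, fun n ↦ hsub n (X n), fun n ↦ hmin n (X n)⟩

theorem eventually_injective_preimage_val {κ : Type*} [Finite κ] {σ : κ → Set ℕ}
    (hσ : Function.Injective σ) :
    ∀ᶠ n in Filter.atTop, Function.Injective fun k ↦ (Fin.val ⁻¹' σ k : Set (Fin n)) := by
  have hsep : ∀ k l, k ≠ l → ∀ᶠ n in Filter.atTop,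
      (Fin.val ⁻¹' σ k : Set (Fin n)) ≠ Fin.val ⁻¹' σ l := by
    intro k l hkl
    obtain ⟨m, hm⟩ : ∃ m, ¬(m ∈ σ k ↔ m ∈ σ l) := by
      by_contra! h
      exact hkl (hσ (Set.ext h))
    filter_upwards [Filter.eventually_gt_atTop m] with n hn heq
    exact hm (Set.ext_iff.1 heq ⟨m, hn⟩)
  filter_upwards [Filter.eventually_all.2 fun k ↦ Filter.eventually_all.2 fun l ↦
    Filter.eventually_imp_distrib_left.2 (hsep k l)] with n hn k l heq
  exact by_contra fun hkl ↦ hn k l hkl heq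

end Tree

section Flows

variable {G : Type*} [Group G]

instance (Z : SubMulAction G (Config G)) : ContinuousConstSMul G Z :=
  ⟨fun g ↦ (continuous_subtype_val.const_smul g).subtype_mk _⟩

theorem isMinimalFlow_of_surjective {X Y : Type*} [TopologicalSpace X] [MulAction G X]
    [TopologicalSpace Y] [MulAction G Y] (hX : IsMinimalFlow G X) {f : X →[G] Y}
    (hf : Continuous f) (hsurj : Function.Surjective f) : IsMinimalFlow G Y := by
  intro y
  obtain ⟨x, rfl⟩ := hsurj y
  refine (hsurj.denseRange.dense_image hf (hX x)).mono ?_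
  rintro _ ⟨_, ⟨g, rfl⟩, rfl⟩
  exact ⟨g, (map_smul f g x).symm⟩

theorem isMinimalFlow_pi {ι : Type*} {Z : ι → SubMulAction G (Config G)}
    (hZ : ∀ W : Finset G, IsJointlyMinimalOn (W : Set G) fun i ↦ (Z i : Set (Config G))) :
    IsMinimalFlow G (∀ i, Z i) := by
  classical
  intro y u
  choose g hg using fun W ↦ hZ W (fun i ↦ u i) (fun i ↦ y i) (fun i ↦ (u i).2) fun i ↦ (y i).2
  refine mem_closure_of_tendsto (f := fun W ↦ g W • y) (b := Filter.atTop) ?_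
    (Filter.Eventually.of_forall fun W ↦ ⟨g W, rfl⟩)
  refine tendsto_pi_nhds.2 fun i ↦ tendsto_subtype_rng.2 <|
    tendsto_pi_nhds.2 fun w ↦ tendsto_pi_nhds.2 fun γ ↦ tendsto_const_nhds.congr' ?_
  filter_upwards [Filter.eventually_ge_atTop ({w, γ} : Finset G)] with W hW
  exact (hg W i w (hW (by simp)) (hW (by simp))).symm

variable [Infinite G] [Countable G]

theorem exists_subMulAction_isJointlyMinimalOn :
    ∃ Y : Set ℕ → SubMulAction G (Config G),
      (∀ α, IsClosed (Y α : Set (Config G))) ∧ (∀ α, (Y α : Set (Config G)).Nonempty) ∧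
      (∀ α, (Y α : Set (Config G)) ⊆ properConfigs G) ∧
      ∀ {κ : Type} [Finite κ] {σ : κ → Set ℕ}, Function.Injective σ → ∀ W : Finset G,
        IsJointlyMinimalOn (W : Set G) fun k ↦ (Y (σ k) : Set (Config G)) := by
  obtain ⟨W, -, hW⟩ := Filter.exists_seq_monotone_tendsto_atTop_atTop (Finset G)
  obtain ⟨X, hflex, hsub, hmin⟩ := exists_tree_isFlexible_isJointlyMinimalOn W
  have hne : ∀ n i, (X n i).Nonempty := fun n i ↦ (hflex n i).choose_spec.2.nonempty
  have hcl : ∀ n i, IsClosed (X n i) := fun n i ↦ (hflex n i).choose_spec.2.isClosed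
  have hinv : ∀ n i g, ∀ x ∈ X n i, g • x ∈ X n i := fun n i ↦
    (hflex n i).choose_spec.2.smul_mem
  let Y : Set ℕ → SubMulAction G (Config G) := fun α ↦
    { carrier := ⋂ n, X n (Fin.val ⁻¹' α)
      smul_mem' := fun g x hx ↦
        Set.mem_iInter.2 fun n ↦ hinv n _ g x (Set.mem_iInter.1 hx n) }
  refine ⟨Y, fun α ↦ isClosed_iInter fun n ↦ hcl n _, fun α ↦ ?_, fun α ↦ ?_, ?_⟩
  · exact IsCompact.nonempty_iInter_of_sequence_nonempty_isCompact_isClosed _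
      (fun n ↦ hsub n _) (fun n ↦ hne n _) (hcl 0 _).isCompact fun n ↦ hcl n _
  · exact (Set.iInter_subset _ 0).trans (hflex 0 _).choose_spec.2.subset_properConfigs
  · intro κ _ σ hσ V
    have hinj := (Filter.tendsto_add_atTop_nat 1).eventually (eventually_injective_preimage_val hσ)
    obtain ⟨n, hn, hVW⟩ := (hinj.and (hW.eventually_ge_atTop V)).exists
    exact ((hmin n).comp_injective (hne (n + 1)) hn).anti (Finset.coe_subset.2 hVW) fun k ↦
      Set.iInter_subset _ (n + 1)

end Flows

end FreeMinimalFlows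

open FreeMinimalFlows

/-- Let `G` be a countable, infinite discrete group.  Then there exists a
family, indexed by `Set ℕ` (hence of cardinality continuum), of free, metrizable, minimal
`G`-flows that are mutually disjoint: the product of every finite subfamily (with the
diagonal `G`-action) is minimal. -/
theorem exists_continuum_many_mutually_disjoint_free_minimal_flows
    {G : Type u} [Group G] [Countable G] [Infinite G] :
    ∃ Y : Set ℕ → GFlow G,
      (∀ i, CompactSpace (Y i).carrier) ∧ (∀ i, T2Space (Y i).carrier) ∧
      (∀ i, Nonempty (Y i).carrier) ∧
      (∀ i, TopologicalSpace.MetrizableSpace (Y i).carrier) ∧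
      (∀ i, ContinuousConstSMul G (Y i).carrier) ∧
      (∀ i, ∀ (g : G) (y : (Y i).carrier), g • y = y → g = 1) ∧
      (∀ i, IsMinimalFlow G (Y i).carrier) ∧
      (∀ s : Finset (Set ℕ),
        ∀ x : (∀ i : s, (Y i).carrier), Dense (MulAction.orbit G x)) := by
  obtain ⟨Y, hclosed, hne, hproper, hmin⟩ := exists_subMulAction_isJointlyMinimalOn (G := G)
  refine ⟨fun α ↦ { carrier := Y α }, fun α ↦ ?_, fun α ↦ ?_, fun α ↦ ?_, fun α ↦ ?_, fun α ↦ ?_,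
    fun α g y hy ↦ ?_, fun α ↦ ?_, fun s ↦ ?_⟩
  · exact isCompact_iff_compactSpace.1 (hclosed α).isCompact
  · infer_instance
  · exact (hne α).to_subtype
  · exact Topology.IsEmbedding.subtypeVal.metrizableSpace
  · infer_instance
  · exact eq_one_of_smul_eq_self (hproper α y.2) (congrArg Subtype.val hy)
  · have hpi : IsMinimalFlow G (Unit → Y α) :=
      isMinimalFlow_pi (hmin (σ := fun _ : Unit ↦ α) (Function.injective_of_subsingleton _))
    exact isMinimalFlow_of_surjective hpi (f := ⟨fun x ↦ x (), fun _ _ ↦ rfl⟩)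
      (continuous_apply ()) fun y ↦ ⟨fun _ ↦ y, rfl⟩
  · exact isMinimalFlow_pi (hmin Subtype.val_injective)
end

section
/- Let G be a countable icc group (every element other than the identity has an infinite conjugacy class). Then G admits a free, metrizable, minimal, proximal G-flow. -/
open Pointwise

universe u v

/-- A `G`-flow is proximal if any two points can be simultaneously pushed to a single
point: `(y, y)` lies in the closure of `{(g • x₁, g • x₂) : g ∈ G}` for some `y`. -/
def IsProximalFlow (G : Type*) [Group G] (X : Type*) [TopologicalSpace X]
    [MulAction G X] : Prop :=
  ∀ x₁ x₂ : X, ∃ y : X, (y, y) ∈ closure (Set.range fun g : G => (g • x₁, g • x₂))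

/-!
Call a point `z` of a flow uniformly proximal if, for every entourage `W`, finitely many elements of
`G` suffice to bring any two points of the orbit of `z` within `W` of each other. Then the closure
of the orbit is proximal. Moreover uniform proximality passes to products coordinate by coordinate:
bring the first coordinates together, and then the second ones by one of finitely many elements,
having made the first ones so close that they stay close. Hence it is enough to find, for each
`g ≠ 1` separately, a uniformly proximal point of the Bernoulli flow `G → Bool` such that `g` has no
fixed point in its orbit closure; the product of these points over all `g` has a free orbit closure,
and any minimal subflow of it is the required flow.

For a given `g` the point is found in the intersection of the closures of a decreasing sequence of
strongly irreducible shift-invariant sets of configurations. None of the configurations in the first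
one is fixed by `g`. In each further one, a pattern on a large finite set is repeated around all
points of a sparse subset of `G`, where the sparse subsets range over a strongly irreducible family
such that any two points of `G` are carried into the sparse set simultaneously by one of finitely
many elements.

To build the sparse sets, let `V` be the prescribed separation. Infinite conjugacy classes and
B. H. Neumann's lemma on coverings by cosets provide switching elements, and a tower of these yields
finite `V`-separated sets `T` and `P` such that each `x⁻¹ * v * y` with `x, y ∈ T` and `v ∈ V`
is carried by some element of `T` into `P`. If `E` is a maximal sparse set, it follows that the
`V`-separated set `T * E` meets `P * h` for every `h`. Overlaying `T * E` with the translates of `P`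
by the points of an even sparser set makes the hits occur simultaneously at any two given points.
-/

namespace IccFlow

universe w

section Group

variable {G : Type*} [Group G]

/-! ### Switching elements -/

open Filter

/-- A group is icc if every non-identity element has an infinite conjugacy class. -/
def IsICC (G : Type*) [Group G] : Prop :=
  ∀ g : G, g ≠ 1 → {h : G | IsConj g h}.Infinite

/-- The filter generated by the complements of left cosets of infinite-index subgroups. By
B. H. Neumann's lemma it is proper, so its members are the "generic" subsets of `G`. -/
def cosetAvoiding (G : Type*) [Group G] : Filter G :=
  generate {s | ∃ (g : G) (H : Subgroup G), ¬ H.FiniteIndex ∧ s = (g • (H : Set G))ᶜ}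

instance : (cosetAvoiding G).NeBot := by
  refine generate_neBot_iff.2 fun t ht htfin => ?_
  choose! g H hH ht using ht
  by_contra hne
  obtain ⟨s, hs, hfin⟩ := Subgroup.exists_finiteIndex_of_leftCoset_cover
    (s := htfin.toFinset) (g := g) (H := H) <| by
    refine Set.eq_univ_of_forall fun x => ?_
    simp only [Set.Nonempty, Set.mem_sInter, not_exists, not_forall] at hne
    obtain ⟨s, hst, hxs⟩ := hne x
    rw [ht hst, Set.notMem_compl_iff] at hxs
    exact Set.mem_biUnion (htfin.mem_toFinset.2 hst) hxs
  exact hH (htfin.mem_toFinset.1 hs) hfin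

theorem eventually_notMem_smul_coe (g : G) {H : Subgroup G} (hH : ¬ H.FiniteIndex) :
    ∀ᶠ q in cosetAvoiding G, q ∉ g • (H : Set G) :=
  mem_generate_of_mem ⟨g, H, hH, rfl⟩

theorem tendsto_mul_left_cosetAvoiding (b : G) :
    Tendsto (b * ·) (cosetAvoiding G) (cosetAvoiding G) := by
  refine le_generate_iff.2 ?_
  rintro _ ⟨g, H, hH, rfl⟩
  refine mem_map.2 ?_
  filter_upwards [eventually_notMem_smul_coe (b⁻¹ * g) hH] with q hq
  rwa [mul_smul, Set.mem_inv_smul_set_iff] at hq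

theorem eventually_ne_cosetAvoiding [Infinite G] (c : G) : ∀ᶠ q in cosetAvoiding G, q ≠ c := by
  have hbot : ¬ (⊥ : Subgroup G).FiniteIndex := fun h =>
    h.index_ne_zero (by rw [Subgroup.index_bot, Nat.card_eq_zero_of_infinite])
  filter_upwards [eventually_notMem_smul_coe c hbot] with q hq hqc
  exact hq (by simp [hqc])

namespace IsICC

theorem infinite (hG : IsICC G) {g : G} (hg : g ≠ 1) : Infinite G :=
  Set.infinite_univ_iff.1 ((hG g hg).mono (Set.subset_univ _))

theorem not_finiteIndex_centralizer (hG : IsICC G) {c : G} (hc : c ≠ 1) :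
    ¬ (Subgroup.centralizer {c}).FiniteIndex := by
  intro h
  apply h.index_ne_zero
  rw [Subgroup.centralizer_eq_comap_stabilizer]
  refine (Subgroup.index_comap_of_surjective _ ConjAct.toConjAct.surjective).trans ?_
  rw [MulAction.index_stabilizer]
  refine Set.Infinite.ncard ?_
  convert hG c hc using 1
  ext h
  rw [ConjAct.mem_orbit_conjAct, isConj_comm]
  rfl

theorem eventually_conj_ne (hG : IsICC G) {c : G} (hc : c ≠ 1) (d : G) :
    ∀ᶠ q in cosetAvoiding G, q * c * q⁻¹ ≠ d := by
  by_cases h : ∃ q₀ : G, q₀ * c * q₀⁻¹ = d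
  · obtain ⟨q₀, rfl⟩ := h
    filter_upwards [eventually_notMem_smul_coe q₀ (hG.not_finiteIndex_centralizer hc)]
      with q hq hqc
    refine hq (Set.mem_smul_set_iff_inv_smul_mem.2 (Subgroup.mem_centralizer_singleton_iff.2 ?_))
    calc q₀⁻¹ * q * c = q₀⁻¹ * (q * c * q⁻¹) * q := by group
      _ = c * (q₀⁻¹ * q) := by rw [hqc]; group
  · exact Eventually.of_forall fun q hq => h ⟨q, hq⟩

theorem frequently_forall_sq_ne_one [Infinite G] (hG : IsICC G) {Φ : Set G} (hΦ : Φ.Finite) :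
    ∃ᶠ q in cosetAvoiding G, ∀ a ∈ Φ, (a * q) ^ 2 ≠ 1 := by
  intro hev
  obtain ⟨b, hb⟩ := hΦ.exists_notMem
  -- Two involutions `a * q` and `b * q` conjugate `a * b⁻¹` to its inverse, which is not generic.
  have hbq : ∀ᶠ q in cosetAvoiding G, (b * q) ^ 2 ≠ 1 := by
    have hconj : ∀ᶠ q in cosetAvoiding G, ∀ a ∈ Φ,
        (b * q) * (a * b⁻¹) * (b * q)⁻¹ ≠ (a * b⁻¹)⁻¹ :=
      (eventually_all_finite hΦ).2 fun a ha =>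
        (tendsto_mul_left_cosetAvoiding b).eventually <|
          hG.eventually_conj_ne (mul_inv_eq_one.not.2 (ne_of_mem_of_not_mem ha hb)) _
    filter_upwards [hev, hconj] with q hq hconj hb1
    push Not at hq
    obtain ⟨a, ha, ha1⟩ := hq
    apply hconj a ha
    have hinv : (a * q)⁻¹ = a * q := by rw [inv_eq_iff_mul_eq_one, ← sq, ha1]
    calc (b * q) * (a * b⁻¹) * (b * q)⁻¹
        = (b * q) * (a * q) * (b * q)⁻¹ * (b * q)⁻¹ := by group
      _ = (b * q) * (a * q)⁻¹ * ((b * q) * (b * q))⁻¹ := by rw [hinv]; group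
      _ = (a * b⁻¹)⁻¹ := by rw [← sq, hb1]; group
  have hsq : ∀ᶠ r in cosetAvoiding G, r ^ 2 ≠ 1 := by
    filter_upwards [(tendsto_mul_left_cosetAvoiding b⁻¹).eventually hbq] with r hr
    rwa [mul_inv_cancel_left] at hr
  obtain ⟨q, hq, hq'⟩ := (hev.and ((eventually_all_finite hΦ).2 fun a _ =>
    (tendsto_mul_left_cosetAvoiding a).eventually hsq)).exists
  exact hq hq'

end IsICC

/-- A switching element for `Φ`, after Frisch, Tamuz and Vahidi Ferdowsi: `q` lies outside `Φ`,
conjugation by `q` moves every non-identity element of `Φ` out of `Φ`, and `q * Φ * q` misses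
`Φ`. -/
structure IsSwitching (Φ : Set G) (q : G) : Prop where
  notMem : q ∉ Φ
  eq_one_of_conj_mem : ∀ c ∈ Φ, q * c * q⁻¹ ∈ Φ → c = 1
  mul_mul_notMem : ∀ c ∈ Φ, q * c * q ∉ Φ

theorem IsICC.exists_isSwitching [Infinite G] (hG : IsICC G) {Φ : Set G} (hΦ : Φ.Finite) :
    ∃ q, IsSwitching Φ q := by
  have hne : ∀ᶠ q in cosetAvoiding G, ∀ a ∈ Φ, q ≠ a :=
    (eventually_all_finite hΦ).2 fun a _ => eventually_ne_cosetAvoiding a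
  have hconj : ∀ᶠ q in cosetAvoiding G, ∀ c ∈ Φ, ∀ d ∈ Φ, c ≠ 1 → q * c * q⁻¹ ≠ d := by
    refine (eventually_all_finite hΦ).2 fun c _ => (eventually_all_finite hΦ).2 fun d _ => ?_
    by_cases hc : c = 1
    · simp [hc]
    · filter_upwards [hG.eventually_conj_ne hc d] with q hq _ using hq
  have hcomm : ∀ᶠ q in cosetAvoiding G, ∀ a ∈ Φ, ∀ b ∈ Φ, a * b ≠ 1 →
      (a * q) * (a * b) * (a * q)⁻¹ ≠ a * b := by
    refine (eventually_all_finite hΦ).2 fun a _ => (eventually_all_finite hΦ).2 fun b _ => ?_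
    by_cases hab : a * b = 1
    · simp [hab]
    · filter_upwards [(tendsto_mul_left_cosetAvoiding a).eventually
        (hG.eventually_conj_ne hab (a * b))] with q hq _ using hq
  obtain ⟨q, hsq, hne, hconj, hcomm⟩ :=
    ((hG.frequently_forall_sq_ne_one hΦ).and_eventually (hne.and (hconj.and hcomm))).exists
  refine ⟨q, fun hq => hne q hq rfl, fun c hc hqc => ?_, fun a ha hb => ?_⟩
  · by_contra hc1
    exact hconj c hc _ hqc hc1 rfl
  · -- If `q * a * q = b`, then `a * q` commutes with its square `a * b`.
    have hab : a * (q * a * q) = (a * q) ^ 2 := by simp only [sq, mul_assoc]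
    refine hcomm a ha _ hb (hab ▸ hsq a ha) ?_
    rw [hab, mul_inv_eq_iff_eq_mul, ← pow_succ, ← pow_succ']

/-! ### Towers of switching elements -/

/-- `X` is `V`-separated if distinct points of `X` never differ by a left factor in `V`. -/
def IsSeparated (V X : Set G) : Prop :=
  ∀ x ∈ X, ∀ y ∈ X, x * y⁻¹ ∈ V → x = y

theorem finite_pow {Φ : Set G} (hΦ : Φ.Finite) (n : ℕ) : (Φ ^ n).Finite := by
  induction n with
  | zero => simp
  | succ n ih => simpa only [pow_succ] using ih.mul hΦ

theorem mul_mem_set_pow {Φ : Set G} {x y : G} {m n : ℕ} (hx : x ∈ Φ ^ m) (hy : y ∈ Φ ^ n) :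
    x * y ∈ Φ ^ (m + n) := by
  rw [pow_add]
  exact Set.mul_mem_mul hx hy

/-- A sequence `t` of switching elements, each `t l` being generic relative to a scale `S l` which
contains all earlier ones; `S 0` is the scale at which separation is sought. The exponent `10` is
large enough for all products of elements of `S l` that occur when words in `t` are compared. -/
structure GenericTower (S : ℕ → Set G) (t : ℕ → G) : Prop where
  one_mem_zero : 1 ∈ S 0
  inv_eq : ∀ l, (S l)⁻¹ = S l
  monotone : Monotone S
  seq_mem : ∀ {l m}, l < m → t l ∈ S m
  isSwitching : ∀ l, IsSwitching (S l ^ 10) (t l)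

theorem IsICC.exists_genericTower [Infinite G] (hG : IsICC G) {V : Set G} (hV : V.Finite)
    (hV1 : 1 ∈ V) (hVinv : V⁻¹ = V) : ∃ S t, S 0 = V ∧ GenericTower (G := G) S t := by
  have hswitch : ∀ S : Set G, S.Finite → ∃ q, IsSwitching (S ^ 10) q := fun S hS =>
    hG.exists_isSwitching (finite_pow hS 10)
  choose! q hq using hswitch
  let S : ℕ → Set G := fun n => n.rec V fun _ S => S ∪ {q S, (q S)⁻¹}
  have hsucc (n : ℕ) : S (n + 1) = S n ∪ {q (S n), (q (S n))⁻¹} := rfl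
  have hfin (n : ℕ) : (S n).Finite := by
    induction n with
    | zero => exact hV
    | succ n ih => exact ih.union (Set.toFinite _)
  have hmono : Monotone S := monotone_nat_of_le_succ fun n => Set.subset_union_left
  refine ⟨S, fun n => q (S n), rfl, hV1, fun n => ?_, hmono, fun {l m} hlm => ?_,
    fun n => hq _ (hfin n)⟩
  · induction n with
    | zero => exact hVinv
    | succ n ih => rw [hsucc, Set.union_inv, ih, Set.inv_insert, Set.inv_singleton, inv_inv,
        Set.pair_comm]
  · exact hmono (Nat.succ_le_of_lt hlm) (by simp [hsucc])

namespace GenericTower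

variable {S : ℕ → Set G} {t : ℕ → G} {l m k k' : ℕ} {x y v w : G}

theorem one_mem (h : GenericTower S t) (l : ℕ) : 1 ∈ S l :=
  h.monotone l.zero_le h.one_mem_zero

theorem mem_pow_of_mem_zero (h : GenericTower S t) (hv : v ∈ S 0) : v ∈ S l ^ 1 := by
  rw [pow_one]
  exact h.monotone l.zero_le hv

theorem seq_mem_pow (h : GenericTower S t) (hlm : l < m) : t l ∈ S m ^ 1 := by
  rw [pow_one]
  exact h.seq_mem hlm

theorem pow_mono (h : GenericTower S t) (hk : k ≤ k' := by norm_num) : S l ^ k ⊆ S l ^ k' :=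
  Set.pow_subset_pow_right (h.one_mem l) hk

theorem inv_mem_pow (h : GenericTower S t) (hx : x ∈ S l ^ k) : x⁻¹ ∈ S l ^ k := by
  rwa [← h.inv_eq l, inv_pow, Set.inv_mem_inv]

theorem notMem_pow (h : GenericTower S t) (hk : k ≤ 10) : t l ∉ S l ^ k := fun ht =>
  (h.isSwitching l).notMem (h.pow_mono hk ht)

theorem eq_one_of_conj (h : GenericTower S t) (hx : x ∈ S l ^ k) (hy : t l * x * (t l)⁻¹ ∈ S l ^ k')
    (hk : k ≤ 10 := by norm_num) (hk' : k' ≤ 10 := by norm_num) : x = 1 :=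
  (h.isSwitching l).eq_one_of_conj_mem x (h.pow_mono hk hx) (h.pow_mono hk' hy)

theorem mul_mul_notMem_pow (h : GenericTower S t) (hx : x ∈ S l ^ k) (hk : k ≤ 10 := by norm_num)
    (hk' : k' ≤ 10 := by norm_num) : t l * x * t l ∉ S l ^ k' := fun hy =>
  (h.isSwitching l).mul_mul_notMem x (h.pow_mono hk hx) (h.pow_mono hk' hy)

/-- Words `t l * y` and `t a * (t l)⁻¹ * y` with `a < l`, where `y` is short at scale `l`: the
products of elements of the tower in which `t l` is the dominant letter and comes early. -/
inductive LeadWord (S : ℕ → Set G) (t : ℕ → G) (l : ℕ) : G → Prop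
  | pos {y : G} (hy : y ∈ S l ^ 3) (hy1 : y = 1 → l = 0) : LeadWord S t l (t l * y)
  | neg {y : G} {a : ℕ} (ha : a < l) (hy : y ∈ S l ^ 2) : LeadWord S t l (t a * (t l)⁻¹ * y)

/-- Lead words, together with the words `x * t l` whose dominant letter `t l` comes last. -/
inductive Word (S : ℕ → Set G) (t : ℕ → G) (l : ℕ) : G → Prop
  | lead {x : G} (hx : LeadWord S t l x) : Word S t l x
  | trail {x : G} {m : ℕ} (hx : LeadWord S t m x) (hm : m < l) : Word S t l (x * t l)

theorem mem_of_mul_mem_right (h : GenericTower S t) (hxy : x * y ∈ S l ^ k) (hy : y ∈ S l ^ k') :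
    x ∈ S l ^ (k + k') := by
  simpa using mul_mem_set_pow hxy (h.inv_mem_pow hy)

theorem mem_of_mul_mem_left (h : GenericTower S t) (hxy : x * y ∈ S l ^ k) (hx : x ∈ S l ^ k') :
    y ∈ S l ^ (k' + k) := by
  simpa using mul_mem_set_pow (h.inv_mem_pow hx) hxy

theorem LeadWord.mem_pow (h : GenericTower S t) (hx : LeadWord S t l x) (hlm : l < m) :
    x ∈ S m ^ 4 := by
  cases hx with
  | pos hy _ =>
    exact mul_mem_set_pow (h.seq_mem_pow hlm) (Set.pow_subset_pow_left (h.monotone hlm.le) hy)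
  | neg ha hy =>
    exact mul_mem_set_pow (mul_mem_set_pow (h.seq_mem_pow (ha.trans hlm))
      (h.inv_mem_pow (h.seq_mem_pow hlm))) (Set.pow_subset_pow_left (h.monotone hlm.le) hy)

theorem Word.mem_pow (h : GenericTower S t) (hx : Word S t l x) (hlm : l < m) : x ∈ S m ^ 5 := by
  cases hx with
  | lead hx => exact h.pow_mono (by norm_num) (hx.mem_pow h hlm)
  | trail hx hml => exact mul_mem_set_pow (hx.mem_pow h (hml.trans hlm)) (h.seq_mem_pow hlm)

theorem LeadWord.notMem_pow (h : GenericTower S t) (hx : LeadWord S t l x) : x ∉ S l ^ 6 := by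
  intro hmem
  cases hx with
  | pos hy _ => exact h.notMem_pow (by norm_num) (h.mem_of_mul_mem_right hmem hy)
  | neg ha hy =>
    have hinv := h.mem_of_mul_mem_left (h.mem_of_mul_mem_right hmem hy) (h.seq_mem_pow ha)
    exact h.notMem_pow (by norm_num) (inv_inv (t l) ▸ h.inv_mem_pow hinv)

theorem Word.notMem_pow (h : GenericTower S t) (hx : Word S t l x) : x ∉ S l ^ 6 := by
  cases hx with
  | lead hx => exact hx.notMem_pow h
  | trail hx hml =>
    exact fun hmem => h.notMem_pow le_rfl (h.mem_of_mul_mem_left hmem (hx.mem_pow h hml))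

theorem mul_inv_mem_zero_symm (h : GenericTower S t) (hxy : x * y⁻¹ ∈ S 0) : y * x⁻¹ ∈ S 0 := by
  simpa [h.inv_eq] using Set.inv_mem_inv.2 hxy

theorem Word.level_unique (h : GenericTower S t) (hx : Word S t l x) (hy : Word S t m y)
    (hxy : x * y⁻¹ ∈ S 0) : l = m := by
  wlog hlm : l ≤ m generalizing l m x y
  · exact (this hy hx (h.mul_inv_mem_zero_symm hxy) (le_of_not_ge hlm)).symm
  refine hlm.eq_of_not_lt fun hlt => hy.notMem_pow h ?_
  simpa using mul_mem_set_pow (h.mem_pow_of_mem_zero (h.mul_inv_mem_zero_symm hxy))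
    (hx.mem_pow h hlt)

theorem index_unique (h : GenericTower S t) (hlm : t l * (t m)⁻¹ ∈ S 0) : l = m := by
  wlog hle : l ≤ m generalizing l m
  · exact (this (h.mul_inv_mem_zero_symm hlm) (le_of_not_ge hle)).symm
  refine hle.eq_of_not_lt fun hlt => h.notMem_pow (l := m) (k := 2) (by norm_num) ?_
  simpa using mul_mem_set_pow (h.mem_pow_of_mem_zero (h.mul_inv_mem_zero_symm hlm))
    (h.seq_mem_pow hlt)

theorem isSeparated_range (h : GenericTower S t) : IsSeparated (S 0) (Set.range t) := by
  rintro _ ⟨i, rfl⟩ _ ⟨j, rfl⟩ hij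
  rw [h.index_unique hij]

theorem injective (h : GenericTower S t) : Function.Injective t := fun l m hlm =>
  h.index_unique (by rw [hlm, mul_inv_cancel]; exact h.one_mem_zero)

theorem eq_one_of_conj_inv_mul_mul (h : GenericTower S t) {a b : ℕ} (ha : a < l) (hb : b < l)
    (hv : v ∈ S 0) (hconj : t l * ((t a)⁻¹ * v * t b) * (t l)⁻¹ ∈ S l ^ 4) : v = 1 := by
  have hmid : (t a)⁻¹ * v * t b ∈ S l ^ 3 := mul_mem_set_pow (mul_mem_set_pow
    (h.inv_mem_pow (h.seq_mem_pow ha)) (h.mem_pow_of_mem_zero hv)) (h.seq_mem_pow hb)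
  have hvab : v = t a * (t b)⁻¹ :=
    inv_mul_eq_iff_eq_mul.1 (mul_eq_one_iff_eq_inv.1 (h.eq_one_of_conj hmid hconj))
  obtain rfl : a = b := h.index_unique (by rwa [← hvab])
  rw [hvab, mul_inv_cancel]

theorem pos_mul_neg_inv_notMem (h : GenericTower S t) {a : ℕ} (hx : x ∈ S l ^ 3) (ha : a < l)
    (hy : y ∈ S l ^ 2) : t l * x * (t a * (t l)⁻¹ * y)⁻¹ ∉ S 0 := fun hmem => by
  have hprod : t l * (x * y⁻¹) * t l ∈ S l ^ 2 := by
    simpa [mul_assoc] using mul_mem_set_pow (h.mem_pow_of_mem_zero hmem) (h.seq_mem_pow ha)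
  exact h.mul_mul_notMem_pow (mul_mem_set_pow hx (h.inv_mem_pow hy)) (by norm_num) (by norm_num)
    hprod

theorem LeadWord.eq_of_mul_inv_mem (h : GenericTower S t) (hx : LeadWord S t l x)
    (hy : LeadWord S t l y) (hxy : x * y⁻¹ ∈ S 0) : x = y := by
  cases hx with
  | @pos y₁ hy₁ _ =>
    cases hy with
    | @pos y₂ hy₂ _ =>
      have hconj : t l * (y₁ * y₂⁻¹) * (t l)⁻¹ ∈ S l ^ 1 := by
        simpa [mul_assoc] using h.mem_pow_of_mem_zero (l := l) hxy
      rw [mul_inv_eq_one.1 (h.eq_one_of_conj (mul_mem_set_pow hy₁ (h.inv_mem_pow hy₂)) hconj)]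
    | neg ha hy₂ => exact absurd hxy (h.pos_mul_neg_inv_notMem hy₁ ha hy₂)
  | @neg y₁ a ha hy₁ =>
    cases hy with
    | pos hy₂ _ =>
      exact absurd (h.mul_inv_mem_zero_symm hxy) (h.pos_mul_neg_inv_notMem hy₂ ha hy₁)
    | @neg y₂ b hb hy₂ =>
      refine mul_inv_eq_one.1 (h.eq_one_of_conj_inv_mul_mul ha hb hxy ?_)
      convert mul_mem_set_pow hy₁ (h.inv_mem_pow hy₂) using 1
      group

theorem lead_mul_trail_inv_notMem (h : GenericTower S t) (hx : LeadWord S t l x)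
    (hy : LeadWord S t m y) (hm : m < l) : x * (y * t l)⁻¹ ∉ S 0 := fun hmem => by
  have hprod : x * (t l)⁻¹ ∈ S l ^ 5 := by
    simpa [mul_assoc] using mul_mem_set_pow (h.mem_pow_of_mem_zero hmem) (hy.mem_pow h hm)
  cases hx with
  | pos hz hz1 => exact absurd (hz1 (h.eq_one_of_conj hz hprod)) hm.pos.ne'
  | @neg z a ha hz =>
    have hinv : (t l)⁻¹ * z * (t l)⁻¹ ∈ S l ^ 6 := by
      rw [mul_assoc]
      exact h.mem_of_mul_mem_left (by simpa [mul_assoc] using hprod) (h.seq_mem_pow ha)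
    have hz' : t l * ((t l)⁻¹ * z * (t l)⁻¹) * t l ∈ S l ^ 2 := by simpa [mul_assoc] using hz
    exact h.mul_mul_notMem_pow hinv (by norm_num) (by norm_num) hz'

theorem Word.eq_of_mul_inv_mem (h : GenericTower S t) (hx : Word S t l x) (hy : Word S t m y)
    (hxy : x * y⁻¹ ∈ S 0) : x = y := by
  obtain rfl := hx.level_unique h hy hxy
  cases hx with
  | lead hx =>
    cases hy with
    | lead hy => exact hx.eq_of_mul_inv_mem h hy hxy
    | trail hy hm => exact absurd hxy (h.lead_mul_trail_inv_notMem hx hy hm)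
  | @trail x k hx hk =>
    cases hy with
    | lead hy =>
      exact absurd (h.mul_inv_mem_zero_symm hxy) (h.lead_mul_trail_inv_notMem hy hx hk)
    | @trail y k' hy hk' =>
      have hxy' : x * y⁻¹ ∈ S 0 := by simpa [mul_assoc] using hxy
      obtain rfl := (Word.lead hx).level_unique h (.lead hy) hxy'
      rw [hx.eq_of_mul_inv_mem h hy hxy']

theorem exists_word_of_ne (h : GenericTower S t) {a i j : ℕ} (hai : a ≠ i) (haj : a ≠ j)
    (hij : i ≠ j) (hv : v ∈ S 0) : ∃ l, Word S t l (t a * ((t i)⁻¹ * v * t j)) := by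
  have hvl (l : ℕ) : v ∈ S l ^ 1 := h.mem_pow_of_mem_zero hv
  rcases lt_or_gt_of_ne hai with hai | hia
  · rcases lt_or_gt_of_ne hij with hij | hji
    · refine ⟨j, ?_⟩
      have hlead : LeadWord S t i (t a * (t i)⁻¹ * v) := .neg hai (h.pow_mono (by norm_num) (hvl i))
      simpa only [mul_assoc] using Word.trail hlead hij
    · refine ⟨i, .lead ?_⟩
      have hlead : LeadWord S t i (t a * (t i)⁻¹ * (v * t j)) :=
        .neg hai (mul_mem_set_pow (hvl i) (h.seq_mem_pow hji))
      simpa only [mul_assoc] using hlead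
  · have hinv : (t i)⁻¹ * v ∈ S a ^ 2 :=
      mul_mem_set_pow (h.inv_mem_pow (h.seq_mem_pow hia)) (hvl a)
    rcases lt_or_gt_of_ne haj with haj | hja
    · refine ⟨j, ?_⟩
      have hlead : LeadWord S t a (t a * ((t i)⁻¹ * v)) :=
        .pos (h.pow_mono (by norm_num) hinv) fun hone => absurd (h.mem_pow_of_mem_zero hv) (by
          rw [← inv_mul_eq_one.1 hone]
          exact h.notMem_pow (by norm_num))
      simpa only [mul_assoc] using Word.trail hlead haj
    · refine ⟨a, .lead (.pos (mul_mem_set_pow hinv (h.seq_mem_pow hja)) fun hone => ?_)⟩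
      have hvij : v = t i * (t j)⁻¹ :=
        inv_mul_eq_iff_eq_mul.1 (mul_eq_one_iff_eq_inv.1 hone)
      exact absurd (h.index_unique (hvij ▸ hv)) hij

theorem leadWord_succ (h : GenericTower S t) (i : ℕ) (hv : v ∈ S 0) (hv1 : v ≠ 1) :
    LeadWord S t (i + 1) (t (i + 1) * ((t i)⁻¹ * v * t i)) := by
  have hi : t i ∈ S (i + 1) ^ 1 := h.seq_mem_pow i.lt_succ_self
  refine .pos (mul_mem_set_pow (mul_mem_set_pow (h.inv_mem_pow hi) (h.mem_pow_of_mem_zero hv)) hi)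
    fun hone => absurd ?_ hv1
  simpa [mul_assoc] using congrArg (fun x => t i * x * (t i)⁻¹) hone

theorem leadWord_zero (h : GenericTower S t) : LeadWord S t 0 (t 0) := by
  simpa using LeadWord.pos (t := t) (y := 1)
    (h.pow_mono (k := 0) (by norm_num) (by simp)) fun _ => rfl

variable {a b M : ℕ}

theorem mul_conj_mul_inv_notMem (h : GenericTower S t) (ha : a < M) (hv : v ∈ S 0) (hv1 : v ≠ 1)
    (hx : x ∈ S M ^ 5) : x * (t a * ((t M)⁻¹ * v * t M))⁻¹ ∉ S 0 := fun hmem => by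
  have hword : t a * ((t M)⁻¹ * v * t M) ∈ S M ^ 6 := by
    simpa using mul_mem_set_pow (h.mem_pow_of_mem_zero (h.mul_inv_mem_zero_symm hmem)) hx
  have hconj : t M * ((t M)⁻¹ * v * t M) * (t M)⁻¹ ∈ S M ^ 1 := by
    simpa [mul_assoc] using h.mem_pow_of_mem_zero (l := M) hv
  have hone := h.eq_one_of_conj (h.mem_of_mul_mem_left hword (h.seq_mem_pow ha)) hconj
  exact hv1 (by simpa [mul_assoc] using congrArg (fun x => t M * x * (t M)⁻¹) hone)

theorem mul_conj_separated (h : GenericTower S t) (ha : a < M) (hb : b < M) (hv : v ∈ S 0)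
    (hw : w ∈ S 0)
    (hmem : t a * ((t M)⁻¹ * v * t M) * (t b * ((t M)⁻¹ * w * t M))⁻¹ ∈ S 0) :
    t a * ((t M)⁻¹ * v * t M) = t b * ((t M)⁻¹ * w * t M) := by
  refine mul_inv_eq_one.1 (h.eq_one_of_conj_inv_mul_mul ha hb hmem ?_)
  have hvw : v * w⁻¹ ∈ S M ^ 4 := h.pow_mono (k := 2) (by norm_num)
    (mul_mem_set_pow (h.mem_pow_of_mem_zero hv) (h.inv_mem_pow (h.mem_pow_of_mem_zero hw)))
  convert hvw using 1
  group

end GenericTower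

theorem exists_lt_ne_notMem {α : Type*} {u : ℕ → α} (hu : Function.Injective u) {Φ : Set α}
    (hΦ : Φ.Finite) {N : ℕ} (hN : Φ.ncard + 2 < N) (i j : ℕ) :
    ∃ a < N, a ≠ i ∧ a ≠ j ∧ u a ∉ Φ := by
  classical
  have hcard : ((hΦ.toFinset.preimage u hu.injOn) ∪ {i, j}).card < (Finset.range N).card := by
    rw [Finset.card_range]
    refine lt_of_le_of_lt ((Finset.card_union_le _ _).trans (add_le_add ?_ Finset.card_le_two)) hN
    rw [Set.ncard_eq_toFinset_card Φ hΦ]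
    exact Finset.card_le_card_of_injOn u (fun _ h => Finset.mem_preimage.1 h) hu.injOn
  obtain ⟨a, haN, ha⟩ := Finset.exists_mem_notMem_of_card_lt_card hcard
  refine ⟨a, Finset.mem_range.1 haN, ?_⟩
  simpa [not_or, and_assoc, and_comm] using ha

theorem ncard_mul_le (V X : Set G) : (V * X).ncard ≤ V.ncard * X.ncard := by
  simpa only [Nat.card_coe_set_eq] using Set.natCard_mul_le

theorem mem_mul_iff_exists_mul_inv_mem {V X : Set G} {x : G} :
    x ∈ V * X ↔ ∃ y ∈ X, x * y⁻¹ ∈ V := by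
  simp only [Set.mem_mul]
  constructor
  · rintro ⟨v, hv, y, hy, rfl⟩
    exact ⟨y, hy, by simpa using hv⟩
  · rintro ⟨y, hy, hxy⟩
    exact ⟨_, hxy, y, hy, by simp⟩

theorem IsSeparated.union {V X Y : Set G} (hV : V⁻¹ = V) (hX : IsSeparated V X)
    (hY : IsSeparated V Y) (hXY : Disjoint X (V * Y)) : IsSeparated V (X ∪ Y) := by
  have not_close {x y : G} (hx : x ∈ X) (hy : y ∈ Y) : x * y⁻¹ ∉ V := fun h =>
    Set.disjoint_left.1 hXY hx (mem_mul_iff_exists_mul_inv_mem.2 ⟨y, hy, h⟩)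
  rintro x (hx | hx) y (hy | hy) hxy
  · exact hX x hx y hy hxy
  · exact absurd hxy (not_close hx hy)
  · refine absurd ?_ (not_close hy hx)
    rw [← hV]
    simpa using hxy
  · exact hY x hx y hy hxy

theorem IsSeparated.mono {V W X Y : Set G} (hX : IsSeparated W Y) (hVW : V ⊆ W) (hXY : X ⊆ Y) :
    IsSeparated V X :=
  fun x hx y hy hxy => hX x (hXY hx) y (hXY hy) (hVW hxy)

namespace GenericTower

variable {S : ℕ → Set G} {t : ℕ → G} {M m i j : ℕ} {v : G} {R : Set G}

theorem exists_top_words (h : GenericTower S t) (hfin : (S 0).Finite)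
    (hM : (S 0).ncard * (S 0).ncard + 2 < M) {D : Set G} (hD : D.Finite)
    (hDcard : D.ncard ≤ (S 0).ncard) :
    ∃ R : Set G, R.Finite ∧ R.ncard ≤ (S 0).ncard ∧ IsSeparated (S 0) R ∧
      Disjoint (S M ^ 5) (S 0 * R) ∧ Disjoint D (S 0 * R) ∧
      ∀ v ∈ S 0, v ≠ 1 → ∃ a < M, t a * ((t M)⁻¹ * v * t M) ∈ R := by
  have hcard : (S 0 * D).ncard + 2 < M :=
    (Nat.add_le_add_right ((ncard_mul_le _ _).trans (Nat.mul_le_mul_left _ hDcard)) 2).trans_lt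
      hM
  have hchoice (v : G) : ∃ a < M, t a * ((t M)⁻¹ * v * t M) ∉ S 0 * D := by
    obtain ⟨a, ha, -, -, haD⟩ := exists_lt_ne_notMem
      ((mul_left_injective ((t M)⁻¹ * v * t M)).comp h.injective) (hfin.mul hD) hcard 0 0
    exact ⟨a, ha, haD⟩
  choose f hfM hfD using hchoice
  refine ⟨(fun v => t (f v) * ((t M)⁻¹ * v * t M)) '' (S 0 \ {1}), hfin.sdiff.image _,
    (Set.ncard_image_le hfin.sdiff).trans (Set.ncard_le_ncard Set.sdiff_subset hfin), ?_, ?_, ?_,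
    fun v hv hv1 => ⟨f v, hfM v, v, ⟨hv, hv1⟩, rfl⟩⟩
  · rintro _ ⟨v, ⟨hv, -⟩, rfl⟩ _ ⟨w, ⟨hw, -⟩, rfl⟩ hmem
    exact h.mul_conj_separated (hfM v) (hfM w) hv hw hmem
  · refine Set.disjoint_left.2 fun x hx hxR => ?_
    obtain ⟨_, ⟨v, ⟨hv, hv1⟩, rfl⟩, hmem⟩ := mem_mul_iff_exists_mul_inv_mem.1 hxR
    exact h.mul_conj_mul_inv_notMem (hfM v) hv hv1 hx hmem
  · refine Set.disjoint_left.2 fun x hx hxR => ?_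
    obtain ⟨_, ⟨v, -, rfl⟩, hmem⟩ := mem_mul_iff_exists_mul_inv_mem.1 hxR
    exact hfD v (mem_mul_iff_exists_mul_inv_mem.2 ⟨x, hx, h.mul_inv_mem_zero_symm hmem⟩)

theorem exists_word_or_top_word (h : GenericTower S t) (hfin : (S 0).Finite) (hR : R.Finite)
    (hcard : (S 0 * R).ncard + 2 < m + 1) (hlow : Disjoint (S (m + 1) ^ 5) (S 0 * R))
    (hprev : ∀ v ∈ S 0, t (m + 1) * ((t m)⁻¹ * v * t m) ∉ S 0 * R)
    (htop : ∀ v ∈ S 0, v ≠ 1 → ∃ a < m + 1, t a * ((t (m + 1))⁻¹ * v * t (m + 1)) ∈ R)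
    (hi : i ≤ m + 1) (hj : j ≤ m + 1) (hv : v ∈ S 0) :
    ∃ a ≤ m + 1, t a * ((t i)⁻¹ * v * t j) ∈ {x | ∃ l, Word S t l x} \ (S 0 * R) ∪ R := by
  rcases ne_or_eq i j with hij | rfl
  · obtain ⟨a, ha, hai, haj, haR⟩ := exists_lt_ne_notMem
      ((mul_left_injective ((t i)⁻¹ * v * t j)).comp h.injective) (hfin.mul hR) hcard i j
    obtain ⟨l, hl⟩ := h.exists_word_of_ne hai haj hij hv
    exact ⟨a, ha.le, .inl ⟨⟨l, hl⟩, haR⟩⟩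
  have low {l : ℕ} {x : G} (hx : LeadWord S t l x) (hl : l < m + 1) :
      x ∈ {x | ∃ l, Word S t l x} \ (S 0 * R) :=
    ⟨⟨l, .lead hx⟩, Set.disjoint_left.1 hlow ((Word.lead hx).mem_pow h hl)⟩
  by_cases hv1 : v = 1
  · exact ⟨0, by lia, .inl (by simpa [hv1] using low h.leadWord_zero m.succ_pos)⟩
  rcases hi.lt_or_eq with hi | rfl
  · refine ⟨i + 1, hi, .inl ?_⟩
    rcases (Nat.le_of_lt_succ hi).lt_or_eq with him | rfl
    · exact low (h.leadWord_succ i hv hv1) (Nat.succ_lt_succ him)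
    · exact ⟨⟨_, .lead (h.leadWord_succ i hv hv1)⟩, hprev v hv⟩
  · obtain ⟨a, ha, haR⟩ := htop v hv hv1
    exact ⟨a, ha.le, .inr haR⟩

theorem exists_hitting (h : GenericTower S t) (hfin : (S 0).Finite) :
    ∃ T P : Set G, T.Finite ∧ P.Finite ∧ T.Nonempty ∧ IsSeparated (S 0) T ∧ IsSeparated (S 0) P ∧
      ∀ x ∈ T, ∀ v ∈ S 0, ∀ y ∈ T, ∃ s ∈ T, s * (x⁻¹ * v * y) ∈ P := by
  let m := (S 0).ncard * (S 0).ncard + 2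
  obtain ⟨R, hR, hRcard, hRsep, hlow, hprev, htop⟩ := h.exists_top_words (M := m + 1) hfin
    (Nat.lt_succ_self _) (hfin.image fun v => t (m + 1) * ((t m)⁻¹ * v * t m))
    (Set.ncard_image_le hfin)
  have hcard : (S 0 * R).ncard + 2 < m + 1 := Nat.lt_succ_of_le <|
    Nat.add_le_add_right ((ncard_mul_le _ _).trans (Nat.mul_le_mul_left _ hRcard)) 2
  let T := t '' Set.Iic (m + 1)
  have hT : T.Finite := (Set.finite_Iic _).image t
  refine ⟨T, ({x | ∃ l, Word S t l x} \ (S 0 * R) ∪ R) ∩ (T * (T⁻¹ * S 0 * T)), hT,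
    (hT.mul ((hT.inv.mul hfin).mul hT)).inter_of_right _, ⟨t 0, 0, by simp, rfl⟩,
    h.isSeparated_range.mono subset_rfl (Set.image_subset_range _ _), ?_, ?_⟩
  · refine (IsSeparated.union (h.inv_eq 0) ?_ hRsep Set.disjoint_sdiff_left).mono subset_rfl
      Set.inter_subset_left
    rintro x ⟨⟨l, hx⟩, -⟩ y ⟨⟨m, hy⟩, -⟩ hxy
    exact hx.eq_of_mul_inv_mem h hy hxy
  · rintro _ ⟨i, hi, rfl⟩ v hv _ ⟨j, hj, rfl⟩
    obtain ⟨a, ha, hmem⟩ := h.exists_word_or_top_word hfin hR hcard hlow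
      (fun v hv => Set.disjoint_left.1 hprev ⟨v, hv, rfl⟩) htop hi hj hv
    refine ⟨t a, ⟨a, ha, rfl⟩, hmem, Set.mul_mem_mul ⟨a, ha, rfl⟩ ?_⟩
    exact Set.mul_mem_mul (Set.mul_mem_mul (Set.inv_mem_inv.2 ⟨i, hi, rfl⟩) hv) ⟨j, hj, rfl⟩

end GenericTower

/-! ### Strongly irreducible subshifts -/

theorem shift_apply {A : Type*} (g : G) (y : G → A) (h : G) : (g • y) h = y (h * g) :=
  rfl

/-- A shift-invariant set `Y` of configurations is strongly irreducible, with gluing distance a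
finite set `D`, if prescriptions by elements of `Y` on any family of regions whose `D`-thickenings
are pairwise disjoint are realised by a single element of `Y`. The regions are indexed by the
prescribed configurations, the region of an unused one being empty. -/
structure StronglyIrreducible {A : Type*} (Y : Set (G → A)) : Prop where
  smul_mem : ∀ (g : G), ∀ y ∈ Y, g • y ∈ Y
  exists_gluing : ∃ D : Set G, D.Finite ∧ ∀ R : (G → A) → Set G,
    Y.PairwiseDisjoint (fun y => D * R y) → ∃ z ∈ Y, ∀ y ∈ Y, Set.EqOn z y (R y)

namespace StronglyIrreducible

variable {A B : Type*} {Y : Set (G → A)} {Z : Set (G → B)}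

theorem nonempty (hY : StronglyIrreducible Y) : Y.Nonempty := by
  obtain ⟨D, -, hD⟩ := hY.exists_gluing
  obtain ⟨z, hz, -⟩ := hD (fun _ => ∅) fun y _ y' _ _ => by simp
  exact ⟨z, hz⟩

theorem exists_gluing_family (hY : StronglyIrreducible Y) :
    ∃ D : Set G, D.Finite ∧ ∀ {ι : Type w} (y : ι → G → A) (R : ι → Set G), (∀ i, y i ∈ Y) →
      (∀ i j, y i ≠ y j → Disjoint (D * R i) (D * R j)) → ∃ z ∈ Y, ∀ i, Set.EqOn z (y i) (R i) := by
  obtain ⟨D, hDfin, hD⟩ := hY.exists_gluing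
  refine ⟨D, hDfin, fun y R hy hR => ?_⟩
  obtain ⟨z, hz, hzR⟩ := hD (fun w => ⋃ (i) (_ : y i = w), R i) <| by
    intro w _ w' _ hne
    simp only [Function.onFun, Set.mul_iUnion, Set.disjoint_iUnion_left, Set.disjoint_iUnion_right]
    rintro j rfl i rfl
    exact hR i j hne
  exact ⟨z, hz, fun i h hh => hzR _ (hy i) (Set.mem_iUnion₂.2 ⟨i, rfl, hh⟩)⟩

theorem image (hY : StronglyIrreducible Y) {F : (G → A) → G → B}
    (hF : ∀ (g : G) y, F (g • y) = g • F y) {L : Set G} (hL : L.Finite)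
    (hFL : ∀ y y' h, (∀ l ∈ L, y (l * h) = y' (l * h)) → F y h = F y' h) :
    StronglyIrreducible (F '' Y) where
  smul_mem := by
    rintro g _ ⟨y, hy, rfl⟩
    exact ⟨g • y, hY.smul_mem g y hy, hF g y⟩
  exists_gluing := by
    obtain ⟨D, hDfin, hD⟩ := hY.exists_gluing
    refine ⟨D * L, hDfin.mul hL, fun R hR => ?_⟩
    obtain ⟨s, hsY, hs⟩ := Set.exists_subset_bijOn Y F
    obtain ⟨z, hz, hzR⟩ := hD (fun y => {x | y ∈ s ∧ x ∈ L * R (F y)}) <| by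
      intro y _ y' _ hne
      by_cases hys : y ∈ s ∧ y' ∈ s
      · refine (hR (hs.mapsTo hys.1) (hs.mapsTo hys.2) (hs.injOn.ne hys.1 hys.2 hne)).mono ?_ ?_
        all_goals
          simp only [mul_assoc]
          exact Set.mul_subset_mul_left fun x hx => hx.2
      · rcases not_and_or.1 hys with h | h <;> simp [Function.onFun, h]
    refine ⟨F z, ⟨z, hz, rfl⟩, fun w hw h hh => ?_⟩
    obtain ⟨y, hys, rfl⟩ := hs.surjOn hw
    exact hFL z y h fun l hl => hzR y (hsY hys) ⟨hys, Set.mul_mem_mul hl hh⟩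

theorem prod (hY : StronglyIrreducible Y) (hZ : StronglyIrreducible Z) :
    StronglyIrreducible {y : G → A × B | Prod.fst ∘ y ∈ Y ∧ Prod.snd ∘ y ∈ Z} where
  smul_mem g y hy := ⟨hY.smul_mem g _ hy.1, hZ.smul_mem g _ hy.2⟩
  exists_gluing := by
    obtain ⟨D, hDfin, hD⟩ := hY.exists_gluing_family
    obtain ⟨E, hEfin, hE⟩ := hZ.exists_gluing_family
    refine ⟨D ∪ E, hDfin.union hEfin, fun R hR => ?_⟩
    let P := {y : G → A × B | Prod.fst ∘ y ∈ Y ∧ Prod.snd ∘ y ∈ Z}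
    have hdisj {K : Set G} (hK : K ⊆ D ∪ E) {y y' : P} (hne : y ≠ y') :
        Disjoint (K * R y) (K * R y') :=
      (hR y.2 y'.2 (Subtype.coe_ne_coe.2 hne)).mono (Set.mul_subset_mul_right hK)
        (Set.mul_subset_mul_right hK)
    obtain ⟨y₁, hy₁, h₁⟩ := hD (fun y : P => Prod.fst ∘ y.1) (fun y => R y) (fun y => y.2.1)
      fun _ _ h => hdisj Set.subset_union_left (ne_of_apply_ne (fun y : P => Prod.fst ∘ y.1) h)
    obtain ⟨y₂, hy₂, h₂⟩ := hE (fun y : P => Prod.snd ∘ y.1) (fun y => R y) (fun y => y.2.2)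
      fun _ _ h => hdisj Set.subset_union_right (ne_of_apply_ne (fun y : P => Prod.snd ∘ y.1) h)
    exact ⟨fun h => (y₁ h, y₂ h), ⟨hy₁, hy₂⟩, fun y hy _ hh =>
      Prod.ext (h₁ ⟨y, hy⟩ hh) (h₂ ⟨y, hy⟩ hh)⟩

end StronglyIrreducible

/-- The configurations (as indicator functions) of those `B`-separated subsets of `G` that are
maximal, i.e. meet every translate `B * h`. -/
def maximalSeparated (B : Set G) : Set (G → Prop) :=
  {E | IsSeparated B {h | E h} ∧ ∀ h, ∃ b ∈ B, E (b * h)}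

theorem exists_mem_maximalSeparated_ge {B E₀ : Set G} (hB1 : 1 ∈ B) (hB : B⁻¹ = B)
    (hE₀ : IsSeparated B E₀) : ∃ E ∈ maximalSeparated B, ∀ h ∈ E₀, E h := by
  obtain ⟨E, hE₀E, hE⟩ := zorn_subset_nonempty {E | IsSeparated B E} (fun c hc hchain _ =>
    ⟨⋃₀ c, fun x ⟨s, hs, hx⟩ y ⟨s', hs', hy⟩ hxy => by
      obtain ⟨r, hr, hsr, hs'r⟩ := hchain.directedOn s hs s' hs'
      exact hc hr x (hsr hx) y (hs'r hy) hxy, fun s => Set.subset_sUnion_of_mem⟩) E₀ hE₀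
  refine ⟨fun h => h ∈ E, ⟨hE.prop, fun h => ?_⟩, fun h hh => hE₀E hh⟩
  by_contra! hne
  have hins : IsSeparated B (E ∪ {h}) := by
    refine hE.prop.union hB (fun x hx y hy _ => hx.trans hy.symm) (Set.disjoint_right.2 ?_)
    rintro _ ⟨b, hb, _, rfl, rfl⟩
    exact hne b hb
  exact hne 1 hB1 (by simpa using hE.le_of_ge hins Set.subset_union_left (.inr rfl))

theorem stronglyIrreducible_maximalSeparated {B : Set G} (hBfin : B.Finite) (hB1 : 1 ∈ B)
    (hB : B⁻¹ = B) : StronglyIrreducible (maximalSeparated B) where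
  smul_mem g E hE := by
    refine ⟨fun x hx y hy hxy => mul_right_cancel (hE.1 (x * g) hx (y * g) hy ?_), fun h => ?_⟩
    · simpa using hxy
    · simpa only [shift_apply, mul_assoc] using hE.2 (h * g)
  exists_gluing := by
    refine ⟨B * B, hBfin.mul hBfin, fun R hR => ?_⟩
    obtain ⟨E, hE, hE₀⟩ := exists_mem_maximalSeparated_ge hB1 hB
        (E₀ := {h | ∃ y ∈ maximalSeparated B, y h ∧ h ∈ B * R y}) <| by
      rintro x ⟨y, hy, hyx, hx⟩ x' ⟨y', hy', hyx', hx'⟩ hxx'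
      have hmem : x ∈ B * B * R y' := by
        rw [mul_assoc]
        exact mem_mul_iff_exists_mul_inv_mem.2 ⟨x', hx', hxx'⟩
      have hmem' : x ∈ B * B * R y := by
        rw [mul_assoc]
        exact Set.subset_mul_right _ hB1 hx
      obtain rfl : y = y' := hR.elim hy hy' (Set.not_disjoint_iff.2 ⟨x, hmem', hmem⟩)
      exact hy.1 x hyx x' hyx' hxx'
    refine ⟨E, hE, fun y hy r hr => propext ⟨fun hEr => ?_, fun hyr => ?_⟩⟩
    · obtain ⟨b, hb, hyb⟩ := hy.2 r
      have hEb : E (b * r) := hE₀ _ ⟨y, hy, hyb, Set.mul_mem_mul hb hr⟩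
      rwa [hE.1 _ hEb _ hEr (by simpa using hb)] at hyb
    · exact hE₀ r ⟨y, hy, hyr, Set.subset_mul_right _ hB1 hr⟩

/-! ### Simultaneously syndetic separated sets -/

theorem IsSeparated.mul_right {V X : Set G} (hX : IsSeparated V X) (b : G) :
    IsSeparated V (X * {b}) := by
  rintro _ ⟨x, hx, _, rfl, rfl⟩ _ ⟨y, hy, _, rfl, rfl⟩ hxy
  rw [hX x hx y hy (by simpa using hxy)]

theorem IsSeparated.mul {V T E : Set G} (hT : IsSeparated V T)
    (hE : IsSeparated (T⁻¹ * V * T) E) : IsSeparated V (T * E) := by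
  rintro _ ⟨s, hs, e, he, rfl⟩ _ ⟨s', hs', e', he', rfl⟩ hmem
  have hee : e * e'⁻¹ ∈ T⁻¹ * V * T :=
    ⟨_, Set.mul_mem_mul (Set.inv_mem_inv.2 hs) hmem, s', hs', by simp [mul_assoc]⟩
  obtain rfl := hE e he e' he' hee
  rw [hT s hs s' hs' (by simpa [mul_assoc] using hmem)]

theorem IsSwitching.isSeparated_union_smul {Φ V A K : Set G} {z : G} (hz : IsSwitching Φ z)
    (hV : V⁻¹ = V) (hA : IsSeparated V A) (hVΦ : V ⊆ Φ) (hKΦ : K * K⁻¹ ⊆ Φ)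
    (hVAK : V * A * K⁻¹ ⊆ Φ) : IsSeparated V (A ∪ z • K) := by
  refine hA.union hV ?_ (Set.disjoint_left.2 ?_)
  · rintro _ ⟨k, hk, rfl⟩ _ ⟨k', hk', rfl⟩ hmem
    have hkk : k * k'⁻¹ = 1 := hz.eq_one_of_conj_mem _
      (hKΦ (Set.mul_mem_mul hk (Set.inv_mem_inv.2 hk'))) (hVΦ (by simpa [mul_assoc] using hmem))
    rw [mul_inv_eq_one.1 hkk]
  · rintro _ ha ⟨v, hv, _, ⟨k, hk, rfl⟩, rfl⟩
    refine hz.notMem (hVAK ⟨_, Set.mul_mem_mul (hV ▸ Set.inv_mem_inv.2 hv) ha, _,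
      Set.inv_mem_inv.2 hk, ?_⟩)
    simp [mul_assoc]

theorem IsICC.exists_absorbing [Infinite G] (hG : IsICC G) {V A : Set G} (hVfin : V.Finite)
    (hV1 : 1 ∈ V) (hV : V⁻¹ = V) (hAfin : A.Finite) (hA : IsSeparated V A) :
    ∃ P : Set G, P.Finite ∧ IsSeparated V P ∧ A ⊆ P ∧ ∀ a ∈ A, ∀ a' ∈ A, ∀ x,
      a * x ∈ V * P → a' * x ∈ V * P →
        (∃ p ∈ P, p * x ∈ P) ∨ ∃ v ∈ V, ∃ v' ∈ V, v * a = v' * a' := by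
  let K := A⁻¹ * V * A
  have hKfin : K.Finite := (hAfin.inv.mul hVfin).mul hAfin
  obtain ⟨z, hz⟩ := hG.exists_isSwitching (Φ := V * A * K⁻¹ ∪ K * K⁻¹ ∪ V ∪ V * (A * A⁻¹) * V) <|
    ((((hVfin.mul hAfin).mul hKfin.inv).union (hKfin.mul hKfin.inv)).union hVfin).union
      ((hVfin.mul (hAfin.mul hAfin.inv)).mul hVfin)
  refine ⟨A ∪ z • K, hAfin.union hKfin.smul_set,
    hz.isSeparated_union_smul hV hA (fun _ h => .inl (.inr h)) (fun _ h => .inl (.inl (.inr h)))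
      fun _ h => .inl (.inl (.inl h)),
    Set.subset_union_left, fun a ha a' ha' x hx hx' => ?_⟩
  -- A hit inside `V * A` puts `x` into `K`, so that `z` itself carries `x` into `P`.
  have hit {c : G} (hc : c ∈ A) (hcx : c * x ∈ V * A) : ∃ p ∈ A ∪ z • K, p * x ∈ A ∪ z • K := by
    obtain ⟨v, hv, d, hd, hvd⟩ := hcx
    refine ⟨z, .inr ⟨1, ?_, mul_one z⟩, .inr ⟨x, ?_, rfl⟩⟩
    · exact ⟨_, Set.mul_mem_mul (Set.inv_mem_inv.2 hc) hV1, c, hc, by simp⟩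
    · refine ⟨_, Set.mul_mem_mul (Set.inv_mem_inv.2 hc) hv, d, hd, ?_⟩
      simp only at hvd ⊢
      rw [mul_assoc, hvd, inv_mul_cancel_left]
  rw [Set.mul_union] at hx hx'
  rcases hx with hx | ⟨v, hv, _, ⟨k, hk, rfl⟩, hvk⟩
  · exact .inl (hit ha hx)
  rcases hx' with hx' | ⟨v', hv', _, ⟨k', hk', rfl⟩, hvk'⟩
  · exact .inl (hit ha' hx')
  right
  have hzk : z * k = v⁻¹ * a * x := by rw [mul_assoc]; exact eq_inv_mul_of_mul_eq hvk
  have hzk' : z * k' = v'⁻¹ * a' * x := by rw [mul_assoc]; exact eq_inv_mul_of_mul_eq hvk'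
  have hconj : z * (k * k'⁻¹) * z⁻¹ = v⁻¹ * (a * a'⁻¹) * v' := by
    calc z * (k * k'⁻¹) * z⁻¹ = (z * k) * (z * k')⁻¹ := by group
      _ = v⁻¹ * (a * a'⁻¹) * v' := by rw [hzk, hzk']; group
  have hkk : k * k'⁻¹ = 1 := hz.eq_one_of_conj_mem _
    (.inl (.inl (.inr (Set.mul_mem_mul hk (Set.inv_mem_inv.2 hk'))))) <| hconj ▸ .inr
      (Set.mul_mem_mul (Set.mul_mem_mul (hV ▸ Set.inv_mem_inv.2 hv)
        (Set.mul_mem_mul ha (Set.inv_mem_inv.2 ha'))) hv')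
  refine ⟨v⁻¹, hV ▸ Set.inv_mem_inv.2 hv, v'⁻¹, hV ▸ Set.inv_mem_inv.2 hv', ?_⟩
  rw [mul_inv_eq_one.1 hkk, hzk'] at hzk
  exact (mul_right_cancel hzk).symm

theorem exists_disjoint_mul_singleton [Infinite G] {X : Set G} (hX : X.Finite) :
    ∃ b : G, Disjoint X (X * {b}) := by
  obtain ⟨b, hb⟩ := (hX.inv.mul hX).exists_notMem
  refine ⟨b, Set.disjoint_left.2 ?_⟩
  rintro _ hx ⟨y, hy, _, rfl, rfl⟩
  exact hb ⟨_, Set.inv_mem_inv.2 hy, _, hx, inv_mul_cancel_left y _⟩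

theorem mem_mul_iff_exists_inv_mul_mem {T E : Set G} {x : G} :
    x ∈ T * E ↔ ∃ s ∈ T, s⁻¹ * x ∈ E := by
  simp only [Set.mem_mul]
  constructor
  · rintro ⟨s, hs, e, he, rfl⟩
    exact ⟨s, hs, by simpa using he⟩
  · rintro ⟨s, hs, he⟩
    exact ⟨s, hs, _, he, by simp⟩

/-- Given sets `E₁, E₂` (encoded as one configuration), the union of `P * E₂` with the part of
`T * E₁` that is not `V`-close to `P * E₂`. -/
def overlay (V T P : Set G) (E : G → Prop × Prop) : G → Prop := fun h =>
  h ∈ (T * {x | (E x).1}) \ (V * (P * {x | (E x).2})) ∪ P * {x | (E x).2}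

theorem overlay_iff {V T P : Set G} {E : G → Prop × Prop} {h : G} :
    overlay V T P E h ↔ ((∃ s ∈ T, (E (s⁻¹ * h)).1) ∧ ¬ ∃ q ∈ V * P, (E (q⁻¹ * h)).2) ∨
      ∃ p ∈ P, (E (p⁻¹ * h)).2 := by
  simp only [overlay, ← mul_assoc, Set.mem_union, Set.mem_sdiff, mem_mul_iff_exists_inv_mul_mem,
    Set.mem_ofPred_eq]

theorem overlay_smul (V T P : Set G) (g : G) (E : G → Prop × Prop) :
    overlay V T P (g • E) = g • overlay V T P E := by
  ext h
  simp only [shift_apply, overlay_iff, mul_assoc]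

theorem overlay_congr {V T P : Set G} {E E' : G → Prop × Prop} {h : G}
    (hE : ∀ l ∈ T⁻¹ ∪ P⁻¹ ∪ (V * P)⁻¹, E (l * h) = E' (l * h)) :
    overlay V T P E h = overlay V T P E' h := by
  have hT : (∃ s ∈ T, (E (s⁻¹ * h)).1) ↔ ∃ s ∈ T, (E' (s⁻¹ * h)).1 :=
    exists_congr fun s => and_congr_right fun hs => by
      rw [hE _ (.inl (.inl (Set.inv_mem_inv.2 hs)))]
  have hVP : (∃ q ∈ V * P, (E (q⁻¹ * h)).2) ↔ ∃ q ∈ V * P, (E' (q⁻¹ * h)).2 :=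
    exists_congr fun q => and_congr_right fun hq => by rw [hE _ (.inr (Set.inv_mem_inv.2 hq))]
  have hP : (∃ p ∈ P, (E (p⁻¹ * h)).2) ↔ ∃ p ∈ P, (E' (p⁻¹ * h)).2 :=
    exists_congr fun p => and_congr_right fun hp => by
      rw [hE _ (.inl (.inr (Set.inv_mem_inv.2 hp)))]
  rw [eq_iff_iff, overlay_iff, overlay_iff, hT, hVP, hP]

theorem isSeparated_overlay {V T P : Set G} {E : G → Prop × Prop} (hV : V⁻¹ = V)
    (hT : IsSeparated V T) (hP : IsSeparated V P)
    (hE₁ : IsSeparated (T⁻¹ * V * T) {x | (E x).1})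
    (hE₂ : IsSeparated (P⁻¹ * V * P) {x | (E x).2}) : IsSeparated V {h | overlay V T P E h} :=
  ((hT.mul hE₁).mono subset_rfl Set.sdiff_subset).union hV (hP.mul hE₂) Set.disjoint_sdiff_left

theorem one_mem_conj {V T : Set G} (hV1 : 1 ∈ V) (hT : T.Nonempty) : 1 ∈ T⁻¹ * V * T := by
  obtain ⟨s, hs⟩ := hT
  exact ⟨_, Set.mul_mem_mul (Set.inv_mem_inv.2 hs) hV1, s, hs, by simp⟩

theorem inv_conj {V : Set G} (hV : V⁻¹ = V) (T : Set G) : (T⁻¹ * V * T)⁻¹ = T⁻¹ * V * T := by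
  simp only [mul_inv_rev, inv_inv, hV, mul_assoc]

theorem exists_mul_mem_overlay {V T A P : Set G} {E : G → Prop × Prop} {a a' h : G}
    (hAP : A ⊆ P)
    (hP : ∀ a ∈ A, ∀ a' ∈ A, ∀ x, a * x ∈ V * P → a' * x ∈ V * P →
      (∃ p ∈ P, p * x ∈ P) ∨ ∃ v ∈ V, ∃ v' ∈ V, v * a = v' * a')
    (hE : IsSeparated ((P⁻¹ * V * P)⁻¹ * (P⁻¹ * V * P)) {x | (E x).2}) (ha : a ∈ A) (ha' : a' ∈ A)
    (hne : ∀ v ∈ V, ∀ v' ∈ V, v * a ≠ v' * a') (hah : a * h ∈ T * {x | (E x).1})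
    (hah' : a' * h ∈ T * {x | (E x).1}) : ∃ p ∈ P, overlay V T P E (p * h) := by
  by_contra! hno
  have near {c : G} (hc : c ∈ A) (hch : c * h ∈ T * {x | (E x).1}) :
      ∃ e, (E e).2 ∧ c * (h * e⁻¹) ∈ V * P := by
    by_contra! hfar
    refine hno c (hAP hc) (.inl ⟨hch, ?_⟩)
    rw [← mul_assoc]
    rintro ⟨q, hq, e, he, hqe⟩
    exact hfar e he (by rwa [← mul_assoc, ← hqe, mul_inv_cancel_right])
  have quotient_mem {c e : G} (hc : c ∈ A) (hce : c * (h * e⁻¹) ∈ V * P) :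
      h * e⁻¹ ∈ P⁻¹ * V * P := by
    rw [mul_assoc]
    exact ⟨c⁻¹, Set.inv_mem_inv.2 (hAP hc), _, hce, inv_mul_cancel_left c _⟩
  obtain ⟨e, he, hae⟩ := near ha hah
  obtain ⟨e', he', hae'⟩ := near ha' hah'
  obtain rfl : e = e' := hE e he e' he'
    ⟨_, Set.inv_mem_inv.2 (quotient_mem ha hae), _, quotient_mem ha' hae', by group⟩
  rcases hP a ha a' ha' _ hae hae' with ⟨p, hp, hpx⟩ | ⟨v, hv, v', hv', h⟩
  · exact hno p hp (.inr ⟨_, hpx, e, he, by group⟩)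
  · exact hne v hv v' hv' h

theorem exists_mul_mem_of_hitting {V T P E : Set G}
    (hit : ∀ x ∈ T, ∀ v ∈ V, ∀ y ∈ T, ∃ s ∈ T, s * (x⁻¹ * v * y) ∈ P)
    (hE : ∀ h, ∃ β ∈ T⁻¹ * V * T, β * h ∈ E) (h : G) : ∃ p ∈ P, p * h ∈ T * E := by
  obtain ⟨_, ⟨_, ⟨x, hx, v, hv, rfl⟩, y, hy, rfl⟩, hβ⟩ := hE h
  obtain ⟨s, hs, hsP⟩ := hit x⁻¹ hx v hv y hy
  exact ⟨_, hsP, s, hs, _, hβ, by simp [mul_assoc]⟩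

theorem IsICC.exists_syndetic_overlay [Infinite G] (hG : IsICC G) {V : Set G} (hVfin : V.Finite)
    (hV1 : 1 ∈ V) (hV : V⁻¹ = V) :
    ∃ T P : Set G, T.Finite ∧ P.Finite ∧ T.Nonempty ∧ P.Nonempty ∧ IsSeparated V T ∧
      IsSeparated V P ∧ ∀ E : G → Prop × Prop, Prod.fst ∘ E ∈ maximalSeparated (T⁻¹ * V * T) →
        Prod.snd ∘ E ∈ maximalSeparated ((P⁻¹ * V * P)⁻¹ * (P⁻¹ * V * P)) →
        ∀ h, ∃ p ∈ P, overlay V T P E (p * h) := by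
  obtain ⟨S, t, rfl, h⟩ := hG.exists_genericTower hVfin hV1 hV
  obtain ⟨T, P₁, hTfin, hP₁fin, ⟨τ, hτ⟩, hT, hP₁, hit⟩ := h.exists_hitting hVfin
  obtain ⟨b, hb⟩ := exists_disjoint_mul_singleton (hVfin.mul hP₁fin)
  have hsep : IsSeparated (S 0) (P₁ ∪ P₁ * {b}) := by
    refine hP₁.union hV (hP₁.mul_right b) ?_
    rw [← mul_assoc]
    exact hb.mono_left (Set.subset_mul_right _ hV1)
  obtain ⟨P, hPfin, hP, hAP, hPV⟩ := hG.exists_absorbing hVfin hV1 hV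
    (hP₁fin.union (hP₁fin.mul (Set.finite_singleton b))) hsep
  obtain ⟨s, -, hs⟩ := hit τ hτ 1 hV1 τ hτ
  refine ⟨T, P, hTfin, hPfin, ⟨τ, hτ⟩, ⟨_, hAP (.inl hs)⟩, hT, hP, fun E hE₁ hE₂ h => ?_⟩
  obtain ⟨a, ha, hah⟩ := exists_mul_mem_of_hitting (E := {x | (E x).1}) hit hE₁.2 h
  obtain ⟨a', ha', hah'⟩ := exists_mul_mem_of_hitting (E := {x | (E x).1}) hit hE₁.2 (b * h)
  refine exists_mul_mem_overlay hAP hPV hE₂.1 (.inl ha) (.inr ⟨a', ha', b, rfl, rfl⟩)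
    (fun v hv v' hv' hvv => Set.disjoint_left.1 hb (Set.mul_mem_mul hv ha) ?_) hah ?_
  · exact ⟨_, Set.mul_mem_mul hv' ha', b, rfl, by simp [hvv, mul_assoc]⟩
  · rwa [mul_assoc]

theorem one_mem_inv_mul_self {K : Set G} (hK : K.Nonempty) : 1 ∈ K⁻¹ * K := by
  obtain ⟨k, hk⟩ := hK
  exact ⟨_, Set.inv_mem_inv.2 hk, k, hk, inv_mul_cancel k⟩

theorem IsICC.exists_stronglyIrreducible_simultaneously_syndetic [Infinite G] (hG : IsICC G)
    {V : Set G} (hVfin : V.Finite) :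
    ∃ C : Set (G → Prop), StronglyIrreducible C ∧ (∀ c ∈ C, IsSeparated V {h | c h}) ∧
      ∃ B : Set G, B.Finite ∧ ∀ c ∈ C, ∀ g₁ g₂, ∃ b ∈ B, c (b * g₁) ∧ c (b * g₂) := by
  wlog hV : 1 ∈ V ∧ V⁻¹ = V generalizing V
  · obtain ⟨C, hC, hsep, hsync⟩ := this (V := {1} ∪ (V ∪ V⁻¹))
      ((Set.finite_singleton 1).union (hVfin.union hVfin.inv))
      ⟨.inl rfl, by simp [Set.union_comm]⟩
    exact ⟨C, hC, fun c hc => (hsep c hc).mono (fun v hv => .inr (.inl hv)) subset_rfl, hsync⟩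
  obtain ⟨hV1, hVinv⟩ := hV
  obtain ⟨T, P, hTfin, hPfin, hT, hP, hTsep, hPsep, hhit⟩ :=
    hG.exists_syndetic_overlay hVfin hV1 hVinv
  let K := P⁻¹ * V * P
  have hKfin : K.Finite := (hPfin.inv.mul hVfin).mul hPfin
  have hK1 : 1 ∈ K := one_mem_conj hV1 hP
  have hirr := (stronglyIrreducible_maximalSeparated ((hTfin.inv.mul hVfin).mul hTfin)
    (one_mem_conj hV1 hT) (inv_conj hVinv T)).prod <|
    stronglyIrreducible_maximalSeparated (hKfin.inv.mul hKfin) (one_mem_inv_mul_self ⟨1, hK1⟩)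
      (by simp [mul_inv_rev])
  refine ⟨_, hirr.image (overlay_smul V T P)
    ((hTfin.inv.union hPfin.inv).union (hVfin.mul hPfin).inv) fun _ _ _ => overlay_congr, ?_,
    P * (K⁻¹ * K), hPfin.mul (hKfin.inv.mul hKfin), ?_⟩
  · rintro _ ⟨E, ⟨hE₁, hE₂⟩, rfl⟩
    exact isSeparated_overlay hVinv hTsep hPsep hE₁.1
      (hE₂.1.mono (Set.subset_mul_right _ (by simpa using hK1)) subset_rfl)
  · rintro _ ⟨E, ⟨hE₁, hE₂⟩, rfl⟩ g₁ g₂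
    obtain ⟨β, hβ, he⟩ := hE₂.2 g₁
    obtain ⟨p, hp, hpβ⟩ := hhit E hE₁ hE₂ (β * g₂)
    refine ⟨p * β, Set.mul_mem_mul hp hβ, .inr ?_, by rwa [mul_assoc]⟩
    exact ⟨p, hp, β * g₁, he, (mul_assoc p β g₁).symm⟩

end Group

/-! ### Repeating a pattern -/

section Repeating

variable {G : Type u} [Group G] {A : Type v} {Y : Set (G → A)} {C : Set (G → Prop)} {F : Set G}

/-- The configurations in `Y` that repeat the pattern of `y₀` on `F` around every point of some set
belonging to `C` (sets being encoded as indicator functions). -/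
def repeating (Y : Set (G → A)) (C : Set (G → Prop)) (F : Set G) (y₀ : G → A) :
    Set (G → A) :=
  {y ∈ Y | ∃ c ∈ C, ∀ x, c x → ∀ f ∈ F, y (f * x) = y₀ f}

theorem disjoint_mul_mul_singleton {D R : Set G} {x : G} (hx : x ∉ F⁻¹ * D⁻¹ * D * R) :
    Disjoint (D * (F * {x})) (D * R) := by
  refine Set.disjoint_left.2 ?_
  rintro _ ⟨d, hd, _, ⟨f, hf, _, rfl, rfl⟩, rfl⟩ ⟨d', hd', r, hr, h⟩
  refine hx ⟨_, Set.mul_mem_mul (Set.mul_mem_mul (Set.inv_mem_inv.2 hf) (Set.inv_mem_inv.2 hd)) hd',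
    r, hr, ?_⟩
  simp only at h ⊢
  rw [mul_assoc, h]
  group

theorem exists_repeating_prescriptions (hY : StronglyIrreducible Y) (hC : StronglyIrreducible C)
    {y₀ : G → A} (hy₀ : y₀ ∈ Y) :
    ∃ K : Set G, K.Finite ∧ ∀ Q : (G → A) → Set G,
      (repeating Y C F y₀).PairwiseDisjoint (fun y => K * Q y) →
      ∃ c ∈ C, ∃ w : {x // c x} → G → A, ∀ x, w x ∈ Y ∧ (∀ f ∈ F, w x (f * x) = y₀ f) ∧
        ∀ y ∈ repeating Y C F y₀, x.1 ∈ Q y → w x = y := by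
  obtain ⟨D, hDfin, hD⟩ := hC.exists_gluing_family
  refine ⟨{1} ∪ D, (Set.finite_singleton 1).union hDfin, fun Q hQ => ?_⟩
  choose c hcC hcy using fun y : repeating Y C F y₀ => y.2.2
  obtain ⟨c₀, hc₀, hc₀Q⟩ := hD c (fun y => Q y) hcC fun y y' hne =>
    (hQ y.2 y'.2 (Subtype.coe_ne_coe.2 (ne_of_apply_ne c hne))).mono
      (Set.mul_subset_mul_right Set.subset_union_right)
      (Set.mul_subset_mul_right Set.subset_union_right)
  -- Near the region of `y` the pattern is copied from `y`, elsewhere from a translate of `y₀`.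
  have hw (x : {x // c₀ x}) : ∃ w ∈ Y, (∀ f ∈ F, w (f * x) = y₀ f) ∧
      ∀ y ∈ repeating Y C F y₀, x.1 ∈ Q y → w = y := by
    by_cases hxQ : ∃ y ∈ repeating Y C F y₀, x.1 ∈ Q y
    · obtain ⟨y, hy, hxy⟩ := hxQ
      refine ⟨y, hy.1, hcy ⟨y, hy⟩ x ((hc₀Q ⟨y, hy⟩ hxy).mp x.2), fun y' hy' hxy' => ?_⟩
      exact hQ.elim hy hy' <| Set.not_disjoint_iff.2
        ⟨x, Set.subset_mul_right _ (.inl rfl) hxy, Set.subset_mul_right _ (.inl rfl) hxy'⟩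
    · refine ⟨x.1⁻¹ • y₀, hY.smul_mem _ _ hy₀, fun f _ => ?_,
        fun y hy hxy => absurd ⟨y, hy, hxy⟩ hxQ⟩
      rw [shift_apply, mul_inv_cancel_right]
  choose w hw using hw
  exact ⟨c₀, hc₀, w, hw⟩

theorem stronglyIrreducible_repeating {D : Set G} {y₀ : G → A}
    (hY : StronglyIrreducible Y) (hC : StronglyIrreducible C) (hD : D.Finite) (hF : F.Finite)
    (hDY : ∀ {ι : Type (max u v)} (y : ι → G → A) (R : ι → Set G), (∀ i, y i ∈ Y) →
      (∀ i j, y i ≠ y j → Disjoint (D * R i) (D * R j)) → ∃ z ∈ Y, ∀ i, Set.EqOn z (y i) (R i))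
    (hCsep : ∀ c ∈ C, IsSeparated (F⁻¹ * D⁻¹ * D * F) {h | c h}) (hy₀ : y₀ ∈ Y) :
    StronglyIrreducible (repeating Y C F y₀) where
  smul_mem := by
    rintro g y ⟨hy, c, hc, hcy⟩
    refine ⟨hY.smul_mem g y hy, g • c, hC.smul_mem g c hc, fun x hx f hf => ?_⟩
    simpa only [shift_apply, mul_assoc] using hcy (x * g) hx f hf
  exists_gluing := by
    obtain ⟨K, hK, hglue⟩ := exists_repeating_prescriptions (F := F) hY hC hy₀
    let E := F⁻¹ * D⁻¹ * D
    refine ⟨D ∪ K * E, hD.union (hK.mul ((hF.inv.mul hD.inv).mul hD)), fun R hR => ?_⟩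
    obtain ⟨c, hc, w, hw⟩ := hglue (fun y => E * R y) fun y hy y' hy' hne => by
      simp only [Function.onFun, ← mul_assoc]
      exact (hR hy hy' hne).mono (Set.mul_subset_mul_right Set.subset_union_right)
        (Set.mul_subset_mul_right Set.subset_union_right)
    let Y' := repeating Y C F y₀
    have hRR (y y' : Y') (hne : (y : G → A) ≠ y') : Disjoint (D * R y) (D * R y') :=
      (hR y.2 y'.2 hne).mono (Set.mul_subset_mul_right Set.subset_union_left)
        (Set.mul_subset_mul_right Set.subset_union_left)
    have hFR (x : {x // c x}) (y : Y') (hne : w x ≠ y) :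
        Disjoint (D * (F * {x.1})) (D * R y) :=
      disjoint_mul_mul_singleton fun hxy => hne ((hw x).2.2 y y.2 hxy)
    have hFF (x x' : {x // c x}) (hne : w x ≠ w x') :
        Disjoint (D * (F * {x.1})) (D * (F * {x'.1})) := by
      refine disjoint_mul_mul_singleton fun hxx' => ne_of_apply_ne w hne (Subtype.ext ?_)
      rw [← mul_assoc] at hxx'
      obtain ⟨v, hv, _, rfl, hx⟩ := hxx'
      exact hCsep c hc _ x.2 _ x'.2 (by rwa [← hx, mul_inv_cancel_right])
    obtain ⟨z, hz, hzR⟩ := hDY (Sum.elim (fun y : Y' => y.1) w)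
      (Sum.elim (fun y => R y) fun x => F * {x.1})
      (Sum.rec (fun y => y.2.1) fun x => (hw x).1) <| by
        rintro (y | x) (y' | x') hne
        exacts [hRR y y' hne, (hFR x' y hne.symm).symm, hFR x y' hne, hFF x x' hne]
    exact ⟨z, ⟨hz, c, hc, fun x hx f hf =>
      (hzR (.inr ⟨x, hx⟩) ⟨f, hf, x, rfl, rfl⟩).trans ((hw ⟨x, hx⟩).2.1 f hf)⟩,
      fun y hy => hzR (.inl ⟨y, hy⟩)⟩

theorem StronglyIrreducible.exists_subset_simultaneously_repeating [Infinite G]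
    (hY : StronglyIrreducible Y) (hG : IsICC G) (hF : F.Finite) :
    ∃ Y' ⊆ Y, StronglyIrreducible Y' ∧ ∃ B : Set G, B.Finite ∧ ∀ y ∈ Y', ∀ g₁ g₂, ∃ b ∈ B,
      ∀ f ∈ F, y (f * (b * g₁)) = y (f * (b * g₂)) := by
  obtain ⟨y₀, hy₀⟩ := hY.nonempty
  obtain ⟨D, hD, hDY⟩ := hY.exists_gluing_family
  obtain ⟨C, hC, hCsep, B, hB, hCB⟩ := hG.exists_stronglyIrreducible_simultaneously_syndetic
    (((hF.inv.mul hD.inv).mul hD).mul hF)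
  refine ⟨repeating Y C F y₀, fun y hy => hy.1,
    stronglyIrreducible_repeating hY hC hD hF hDY hCsep hy₀, B, hB, ?_⟩
  rintro y ⟨-, c, hc, hcy⟩ g₁ g₂
  obtain ⟨b, hb, h₁, h₂⟩ := hCB c hc g₁ g₂
  exact ⟨b, hb, fun f hf => (hcy _ h₁ f hf).trans (hcy _ h₂ f hf).symm⟩

end Repeating

/-! ### Uniformly proximal points -/

open scoped Uniformity

section Flow

variable {G : Type*} [Group G] {X : Type*} [MulAction G X]

variable (G) in
/-- A point `z` is uniformly proximal if any two points of its orbit become close, to any prescribed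
degree, under one of finitely many group elements depending on this degree only. Unlike proximality
of an orbit closure this passes to products coordinate by coordinate. -/
def IsUniformlyProximal [UniformSpace X] (z : X) : Prop :=
  ∀ W ∈ 𝓤 X, ∃ B : Set G, B.Finite ∧ ∀ g₁ g₂ : G, ∃ b ∈ B, (b • g₁ • z, b • g₂ • z) ∈ W

theorem IsUniformlyProximal.exists_smul_mem [UniformSpace X] [ContinuousConstSMul G X] {z : X}
    (hz : IsUniformlyProximal G z) {x y : X} (hx : x ∈ closure (MulAction.orbit G z))
    (hy : y ∈ closure (MulAction.orbit G z)) {W : Set (X × X)} (hW : W ∈ 𝓤 X) :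
    ∃ g : G, (g • x, g • y) ∈ W := by
  obtain ⟨W', ⟨hW', hclosed⟩, hsub⟩ := uniformity_hasBasis_closed.mem_iff.1 hW
  obtain ⟨B, hB, hBz⟩ := hz W' hW'
  have hK : IsClosed (⋃ b ∈ B, {p : X × X | (b • p.1, b • p.2) ∈ W'}) :=
    hB.isClosed_biUnion fun b _ => hclosed.preimage (by fun_prop)
  have horbit : MulAction.orbit G z ×ˢ MulAction.orbit G z ⊆
      ⋃ b ∈ B, {p : X × X | (b • p.1, b • p.2) ∈ W'} := by
    rintro ⟨_, _⟩ ⟨⟨g₁, rfl⟩, ⟨g₂, rfl⟩⟩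
    simpa using hBz g₁ g₂
  have hxy : (x, y) ∈ closure (MulAction.orbit G z ×ˢ MulAction.orbit G z) := by
    rw [closure_prod_eq]
    exact ⟨hx, hy⟩
  obtain ⟨b, -, hb⟩ := Set.mem_iUnion₂.1 (closure_minimal horbit hK hxy)
  exact ⟨b, hsub hb⟩

theorem isProximalFlow_of_forall_exists_smul_mem [UniformSpace X] [CompactSpace X]
    (h : ∀ x y : X, ∀ W ∈ 𝓤 X, ∃ g : G, (g • x, g • y) ∈ W) : IsProximalFlow G X := by
  intro x y
  by_contra! hne
  have hdiag : (closure (Set.range fun g : G => (g • x, g • y)))ᶜ ∈ 𝓤 X := by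
    rw [← nhdsSet_diagonal_eq_uniformity, isClosed_closure.isOpen_compl.mem_nhdsSet]
    rintro ⟨p, q⟩ (rfl : p = q)
    exact hne p
  obtain ⟨g, hg⟩ := h x y _ hdiag
  exact hg (subset_closure ⟨g, rfl⟩)

theorem IsUniformlyProximal.pi {ι : Type*} {X : ι → Type*} [∀ i, UniformSpace (X i)]
    [∀ i, MulAction G (X i)] [∀ i, UniformContinuousConstSMul G (X i)] {z : ∀ i, X i}
    (hz : ∀ i, IsUniformlyProximal G (z i)) : IsUniformlyProximal G z := by
  have hfin (V : ∀ i, Set (X i × X i)) (I : Finset ι) : (∀ i ∈ I, V i ∈ 𝓤 (X i)) →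
      ∃ B : Set G, B.Finite ∧ ∀ g₁ g₂ : G, ∃ b ∈ B, ∀ i ∈ I,
        (b • g₁ • z i, b • g₂ • z i) ∈ V i := by
    classical
    induction I using Finset.induction_on generalizing V with
    | empty => exact fun _ => ⟨{1}, Set.finite_singleton 1, by simp⟩
    | insert j I hj ih =>
      intro hV
      obtain ⟨B, hB, hBz⟩ := hz j (V j) (hV j (Finset.mem_insert_self j I))
      obtain ⟨B', hB', hBz'⟩ := ih (fun i => ⋂ b ∈ B, {p | (b • p.1, b • p.2) ∈ V i}) fun i hi =>
        (Filter.biInter_mem hB).2 fun b _ =>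
          uniformContinuous_const_smul b (hV i (Finset.mem_insert_of_mem hi))
      refine ⟨B * B', hB.mul hB', fun g₁ g₂ => ?_⟩
      obtain ⟨b', hb', h'⟩ := hBz' g₁ g₂
      obtain ⟨b, hb, h⟩ := hBz (b' * g₁) (b' * g₂)
      refine ⟨b * b', Set.mul_mem_mul hb hb', fun i hi => ?_⟩
      rcases Finset.mem_insert.1 hi with rfl | hi
      · simpa only [mul_smul] using h
      · simpa only [mul_smul, Set.mem_ofPred_eq] using Set.mem_iInter₂.1 (h' i hi) b hb
  intro W hW
  rw [Pi.uniformity] at hW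
  obtain ⟨⟨I, V⟩, ⟨hI, hV⟩, hsub⟩ :=
    (Filter.HasBasis.iInf' fun i => (𝓤 (X i)).basis_sets.comap _).mem_iff.1 hW
  obtain ⟨B, hB, hBz⟩ := hfin V hI.toFinset fun i hi => hV i (hI.mem_toFinset.1 hi)
  refine ⟨B, hB, fun g₁ g₂ => ?_⟩
  obtain ⟨b, hb, h⟩ := hBz g₁ g₂
  exact ⟨b, hb, hsub (Set.mem_iInter₂.2 fun i hi => h i (hI.mem_toFinset.2 hi))⟩

theorem exists_isMinimalFlow_subset [TopologicalSpace X] [CompactSpace X] [ContinuousConstSMul G X]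
    {K : Set X} (hK : IsClosed K) (hne : K.Nonempty) (hinv : ∀ (g : G), ∀ x ∈ K, g • x ∈ K) :
    ∃ M : SubMulAction G X, (M : Set X) ⊆ K ∧ IsClosed (M : Set X) ∧ (M : Set X).Nonempty ∧
      IsMinimalFlow G M := by
  obtain ⟨M, hMK, ⟨hM, hMne, hMinv⟩, hmin⟩ := zorn_superset_nonempty
    {L : Set X | IsClosed L ∧ L.Nonempty ∧ ∀ (g : G), ∀ x ∈ L, g • x ∈ L}
    (fun c hc hchain hcne => by
      have := hcne.to_subtype
      refine ⟨⋂₀ c, ⟨isClosed_sInter fun L hL => (hc hL).1, ?_, fun g x hx L hL =>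
        (hc hL).2.2 g x (hx L hL)⟩, fun L => Set.sInter_subset_of_mem⟩
      exact IsCompact.nonempty_sInter_of_directed_nonempty_isCompact_isClosed
        (IsChain.directedOn hchain.symm) (fun L hL => (hc hL).2.1) (fun L hL => (hc hL).1.isCompact)
        fun L hL => (hc hL).1) K ⟨hK, hne, hinv⟩
  refine ⟨⟨M, fun g {x} => hMinv g x⟩, hMK, hM, hMne, fun x => ?_⟩
  have hsub : closure (MulAction.orbit G x.1) ⊆ M :=
    closure_minimal (Set.range_subset_iff.2 fun g => hMinv g x x.2) hM
  have hdense : M ⊆ closure (MulAction.orbit G x.1) := hmin ⟨isClosed_closure,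
    (MulAction.nonempty_orbit _).closure, fun g y hy =>
      smul_closure_orbit_subset g x.1 (Set.smul_mem_smul_set hy)⟩ hsub
  rw [Subtype.dense_iff, SubMulAction.val_image_orbit]
  exact hdense

theorem IsUniformlyProximal.exists_minimal_proximal [UniformSpace X] [CompactSpace X]
    [ContinuousConstSMul G X] {z : X} (hz : IsUniformlyProximal G z) :
    ∃ M : SubMulAction G X, (M : Set X) ⊆ closure (MulAction.orbit G z) ∧
      IsClosed (M : Set X) ∧ (M : Set X).Nonempty ∧ IsMinimalFlow G M ∧ IsProximalFlow G M := by
  obtain ⟨M, hMK, hM, hne, hmin⟩ := exists_isMinimalFlow_subset (G := G) isClosed_closure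
    (MulAction.nonempty_orbit z).closure
    fun g x hx => smul_closure_orbit_subset g z (Set.smul_mem_smul_set hx)
  have : CompactSpace M := isCompact_iff_compactSpace.1 hM.isCompact
  refine ⟨M, hMK, hM, hne, hmin, isProximalFlow_of_forall_exists_smul_mem fun x y W hW => ?_⟩
  obtain ⟨V, hV, hVW⟩ := Filter.mem_comap.1 hW
  obtain ⟨g, hg⟩ := hz.exists_smul_mem (hMK x.2) (hMK y.2) hV
  exact ⟨g, hVW hg⟩

end Flow

variable {G : Type*} [Group G]

section Shift

variable {A : Type*} [UniformSpace A]

instance uniformContinuousConstSMul_shift : UniformContinuousConstSMul G (G → A) :=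
  ⟨fun g => uniformContinuous_pi.2 fun h => Pi.uniformContinuous_proj _ (h * g)⟩

theorem isUniformlyProximal_of_forall_repeat {z : G → A}
    (hz : ∀ F : Finset G, ∃ B : Set G, B.Finite ∧ ∀ g₁ g₂, ∃ b ∈ B,
      ∀ f ∈ F, z (f * (b * g₁)) = z (f * (b * g₂))) : IsUniformlyProximal G z := by
  intro W hW
  rw [Pi.uniformity] at hW
  obtain ⟨⟨I, V⟩, ⟨hI, hV⟩, hsub⟩ :=
    (Filter.HasBasis.iInf' fun _ => (𝓤 A).basis_sets.comap _).mem_iff.1 hW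
  obtain ⟨B, hB, hBz⟩ := hz hI.toFinset
  refine ⟨B, hB, fun g₁ g₂ => ?_⟩
  obtain ⟨b, hb, h⟩ := hBz g₁ g₂
  refine ⟨b, hb, hsub (Set.mem_iInter₂.2 fun f hf => ?_)⟩
  simp only [id, Set.mem_preimage, shift_apply, mul_assoc, h f (hI.mem_toFinset.2 hf)]
  exact refl_mem_uniformity (hV f hf)

theorem isClosed_forall_repeat [T2Space A] (F : Set G) {B : Set G} (hB : B.Finite) :
    IsClosed {y : G → A | ∀ g₁ g₂, ∃ b ∈ B, ∀ f ∈ F, y (f * (b * g₁)) = y (f * (b * g₂))} := by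
  have heq : {y : G → A | ∀ g₁ g₂, ∃ b ∈ B, ∀ f ∈ F, y (f * (b * g₁)) = y (f * (b * g₂))} =
      ⋂ (g₁) (g₂), ⋃ b ∈ B, ⋂ f ∈ F, {y | y (f * (b * g₁)) = y (f * (b * g₂))} := by
    ext
    simp
  rw [heq]
  exact isClosed_iInter fun g₁ => isClosed_iInter fun g₂ => hB.isClosed_biUnion fun b _ =>
    isClosed_biInter fun f _ => isClosed_eq (continuous_apply _) (continuous_apply _)

theorem StronglyIrreducible.exists_isUniformlyProximal [Countable G] [Infinite G] [CompactSpace A]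
    [T2Space A] {Y : Set (G → A)} (hY : StronglyIrreducible Y) (hG : IsICC G) :
    ∃ z ∈ closure Y, IsUniformlyProximal G z := by
  obtain ⟨F, hF⟩ := exists_surjective_nat (Finset G)
  choose next hsub hirr B hB hrep using fun n (Y : {Y : Set (G → A) // StronglyIrreducible Y}) =>
    Y.2.exists_subset_simultaneously_repeating hG (F n).finite_toSet
  let Z : ℕ → {Y : Set (G → A) // StronglyIrreducible Y} :=
    fun n => n.rec ⟨Y, hY⟩ fun n Y => ⟨next n Y, hirr n Y⟩
  obtain ⟨z, hz⟩ := IsCompact.nonempty_iInter_of_sequence_nonempty_isCompact_isClosed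
    (fun n => closure (Z n).1) (fun n => closure_mono (hsub n (Z n)))
    (fun n => (Z n).2.nonempty.closure) isClosed_closure.isCompact fun _ => isClosed_closure
  rw [Set.mem_iInter] at hz
  refine ⟨z, hz 0, isUniformlyProximal_of_forall_repeat fun I => ?_⟩
  obtain ⟨n, rfl⟩ := hF I
  exact ⟨B n (Z n), hB n (Z n), closure_minimal (hrep n (Z n))
    (isClosed_forall_repeat _ (hB n (Z n))) (hz (n + 1))⟩

theorem StronglyIrreducible.closure_orbit_subset {Y : Set (G → A)} (hY : StronglyIrreducible Y)
    {z : G → A} (hz : z ∈ closure Y) : closure (MulAction.orbit G z) ⊆ closure Y :=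
  closure_minimal (Set.range_subset_iff.2 fun g =>
    map_mem_closure (continuous_const_smul g) hz (hY.smul_mem g)) isClosed_closure

end Shift

theorem exists_stronglyIrreducible_not_const {g : G} (hg : g ≠ 1) :
    ∃ Y : Set (G → Bool), StronglyIrreducible Y ∧ ∀ y ∈ Y, ¬ (y g = y 1 ∧ y g⁻¹ = y 1) := by
  classical
  let K : Set G := {1, g, g⁻¹}
  have hK : StronglyIrreducible (maximalSeparated K) :=
    stronglyIrreducible_maximalSeparated (Set.toFinite _) (by simp [K])
      (by ext; simp [K, or_comm])
  refine ⟨_, hK.image (F := fun E h => decide (E h)) (fun _ _ => rfl) (Set.finite_singleton 1)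
    (by simp), ?_⟩
  rintro _ ⟨E, ⟨hsep, hmax⟩, rfl⟩ ⟨h₁, h₂⟩
  rw [decide_eq_decide] at h₁ h₂
  have hE1 : E 1 := by
    obtain ⟨b, rfl | rfl | rfl, hb⟩ := hmax 1
    all_goals simp_all
  exact hg (hsep g (h₁.2 hE1) 1 hE1 (by simp [K]))

theorem IsICC.exists_isUniformlyProximal_smul_ne [Countable G] (hG : IsICC G) {g : G} (hg : g ≠ 1) :
    ∃ z : G → Bool, IsUniformlyProximal G z ∧ ∀ y ∈ closure (MulAction.orbit G z), g • y ≠ y := by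
  have := hG.infinite hg
  obtain ⟨Y, hY, hYg⟩ := exists_stronglyIrreducible_not_const hg
  obtain ⟨z, hz, hprox⟩ := hY.exists_isUniformlyProximal hG
  refine ⟨z, hprox, fun y hy hgy => ?_⟩
  have hclosed : IsClosed {y : G → Bool | ¬ (y g = y 1 ∧ y g⁻¹ = y 1)} :=
    (isClosed_discrete {p : Bool × Bool × Bool | ¬ (p.1 = p.2.2 ∧ p.2.1 = p.2.2)}).preimage
      (f := fun y : G → Bool => (y g, y g⁻¹, y 1)) (by fun_prop)
  refine closure_minimal hYg hclosed (hY.closure_orbit_subset hz hy) ⟨?_, ?_⟩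
  · simpa [shift_apply] using congr_fun hgy 1
  · simpa [shift_apply] using (congr_fun hgy g⁻¹).symm

theorem IsICC.exists_isUniformlyProximal_free [Countable G] (hG : IsICC G) :
    ∃ z : {g : G // g ≠ 1} → G → Bool, IsUniformlyProximal G z ∧
      ∀ x ∈ closure (MulAction.orbit G z), ∀ g : G, g • x = x → g = 1 := by
  choose z hprox hz using fun g : {g : G // g ≠ 1} => hG.exists_isUniformlyProximal_smul_ne g.2
  refine ⟨z, .pi hprox, fun x hx g hgx => by_contra fun hg => hz ⟨g, hg⟩ (x ⟨g, hg⟩) ?_ ?_⟩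
  · refine map_mem_closure (f := fun x : {g : G // g ≠ 1} → G → Bool => x ⟨g, hg⟩)
      (continuous_apply _) hx ?_
    rintro _ ⟨h, rfl⟩
    exact ⟨h, rfl⟩
  · exact congr_fun hgx ⟨g, hg⟩

end IccFlow

/-- Every countable icc group (every non-identity element has an infinite
conjugacy class) admits a free, metrizable, minimal, proximal flow. -/
theorem icc_group_admits_free_metrizable_minimal_proximal_flow
    {G : Type u} [Group G] [Countable G]
    (hicc : ∀ g : G, g ≠ 1 → {h : G | IsConj g h}.Infinite) :
    ∃ X : GFlow G,
      CompactSpace X.carrier ∧ T2Space X.carrier ∧ Nonempty X.carrier ∧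
      TopologicalSpace.MetrizableSpace X.carrier ∧ ContinuousConstSMul G X.carrier ∧
      IsMinimalFlow G X.carrier ∧ IsProximalFlow G X.carrier ∧
      (∀ (g : G) (x : X.carrier), g • x = x → g = 1) := by
  obtain ⟨z, hz, hfree⟩ := IccFlow.IsICC.exists_isUniformlyProximal_free hicc
  obtain ⟨M, hMz, hM, hne, hmin, hprox⟩ := hz.exists_minimal_proximal
  have := TopologicalSpace.metrizableSpace_of_t3_secondCountable ({g : G // g ≠ 1} → G → Bool)
  exact ⟨⟨M⟩, isCompact_iff_compactSpace.1 hM.isCompact, inferInstanceAs (T2Space M),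
    hne.to_subtype, Topology.IsEmbedding.subtypeVal.metrizableSpace,
    Topology.IsInducing.subtypeVal.continuousConstSMul id rfl, hmin, hprox,
    fun g x hgx => hfree x (hMz x.2) g (congr_arg Subtype.val hgx)⟩
end

section
/- Let G be a countable, infinite discrete group. For every finite D ⊆ G there exists a strongly irreducible subshift Y ⊆ 2^G such that for every y ∈ Y, the set {g ∈ G : y(g) = 1} is D-separated and nonempty. -/
open Pointwise

/-- A subshift `Z ⊆ A^G` is strongly irreducible if there is a finite `D ⊆ G` such that
for all finite `E₁, E₂ ⊆ G` which are `D`-apart (`DE₁ ∩ DE₂ = ∅`) and all `z₁, z₂ ∈ Z`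
there is `x ∈ Z` agreeing with `z₁` on `E₁` and with `z₂` on `E₂`. -/
def StronglyIrreducible (G : Type*) [Group G] {A : Type*} (Z : Set (G → A)) : Prop :=
  ∃ D : Set G, D.Finite ∧
    ∀ E₁ E₂ : Set G, E₁.Finite → E₂.Finite → Disjoint (D * E₁) (D * E₂) →
      ∀ z₁ ∈ Z, ∀ z₂ ∈ Z, ∃ x ∈ Z,
        (∀ g ∈ E₁, x g = z₁ g) ∧ (∀ g ∈ E₂, x g = z₂ g)

/-!
The subshift consists of the indicator functions of the *maximal* `D`-separated subsets of `G`.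
Maximality is a local condition: a `D`-separated `S` is maximal iff `K * {g}` meets `S` for every
`g`, where `K = D⁻¹ * D ∪ {1}` is the finite set of shifts `k` such that the translates `D g` and
`D k g` may overlap. This yields closedness and invariance.

Locality also shows that `S` is determined on `E` by its trace on `K * E`, in the following strong
sense: any `D`-separated set containing `S ∩ (K * E)` agrees with `S` on `E`. If `E₁` and `E₂` are
`D * K`-apart, the traces of `S₁` on `K * E₁` and of `S₂` on `K * E₂` have a `D`-separated
union, and any maximal `D`-separated set containing this union agrees with `S₁` on `E₁` and with
`S₂` on `E₂`.
-/

theorem exists_subset_maximal_pairwise {α : Type*} {r : α → α → Prop} {s : Set α}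
    (hs : s.Pairwise r) : ∃ t, s ⊆ t ∧ Maximal (fun u : Set α ↦ u.Pairwise r) t :=
  zorn_subset_nonempty {u : Set α | u.Pairwise r}
    (fun c hc hchain _ ↦ ⟨⋃₀ c, (Set.pairwise_sUnion hchain.directedOn).2 hc,
      fun _ ↦ Set.subset_sUnion_of_mem⟩) s hs

section Separated

variable {G : Type*} [Group G] {D E S T : Set G}

theorem disjoint_mul_singleton_iff {g h : G} :
    Disjoint (D * {g}) (D * {h}) ↔ h * g⁻¹ ∉ D⁻¹ * D := by
  rw [← not_iff_not, Set.not_disjoint_iff, not_not, Set.mul_singleton, Set.mul_singleton]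
  constructor
  · rintro ⟨_, ⟨d, hd, rfl⟩, d', hd', hmul : d' * h = d * g⟩
    refine ⟨d'⁻¹, Set.inv_mem_inv.2 hd', d, hd, ?_⟩
    change d'⁻¹ * d = h * g⁻¹
    rw [inv_mul_eq_iff_eq_mul, ← mul_assoc, hmul, mul_inv_cancel_right]
  · rintro ⟨d', hd', d, hd, hmul : d' * d = h * g⁻¹⟩
    refine ⟨d * g, Set.mem_image_of_mem _ hd, d'⁻¹, hd', ?_⟩
    change d'⁻¹ * h = d * g
    rw [inv_mul_eq_iff_eq_mul, ← mul_assoc, hmul, inv_mul_cancel_right]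

theorem dSeparated_iff_pairwiseDisjoint :
    DSeparated G D S ↔ S.PairwiseDisjoint fun g ↦ D * {g} :=
  Iff.rfl

theorem DSeparated.subset (hT : DSeparated G D T) (hST : S ⊆ T) : DSeparated G D S :=
  (dSeparated_iff_pairwiseDisjoint.1 hT).subset hST

theorem DSeparated.exists_subset_maximal (hS : DSeparated G D S) :
    ∃ T, S ⊆ T ∧ Maximal (DSeparated G D) T :=
  exists_subset_maximal_pairwise (dSeparated_iff_pairwiseDisjoint.1 hS)

theorem DSeparated.union (hS : DSeparated G D S) (hT : DSeparated G D T)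
    (hST : Disjoint (D * S) (D * T)) : DSeparated G D (S ∪ T) := by
  rw [dSeparated_iff_pairwiseDisjoint] at hS hT ⊢
  exact hS.union hT fun _ hg _ hh _ ↦
    hST.mono (Set.mul_subset_mul_left (Set.singleton_subset_iff.2 hg))
      (Set.mul_subset_mul_left (Set.singleton_subset_iff.2 hh))

/-- The set of shifts `k` for which the translates `D g` and `D k g` may overlap. The identity is
inserted so that `1 ∈ overlapSet D` also when `D = ∅`. -/
def overlapSet (D : Set G) : Set G :=
  insert 1 (D⁻¹ * D)

theorem one_mem_overlapSet : 1 ∈ overlapSet D :=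
  Set.mem_insert 1 _

theorem finite_overlapSet (hD : D.Finite) : (overlapSet D).Finite :=
  (hD.inv.mul hD).insert 1

theorem dSeparated_iff_forall_overlapSet :
    DSeparated G D S ↔ ∀ k ∈ overlapSet D, ∀ g ∈ S, k * g ∈ S → k = 1 := by
  constructor
  · rintro hS k (rfl | hk) g hg hkg
    · rfl
    · by_contra hne
      have hdisj := hS g hg (k * g) hkg fun heq ↦ hne (mul_eq_right.1 heq.symm)
      exact disjoint_mul_singleton_iff.1 hdisj (by rwa [mul_inv_cancel_right])
  · intro hS g hg h hh hne
    refine disjoint_mul_singleton_iff.2 fun hk ↦ hne (mul_inv_eq_one.1 ?_).symm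
    exact hS (h * g⁻¹) (Set.mem_insert_of_mem 1 hk) g hg (by rwa [inv_mul_cancel_right])

theorem maximal_dSeparated_iff :
    Maximal (DSeparated G D) S ↔ DSeparated G D S ∧ ∀ g, ∃ k ∈ overlapSet D, k * g ∈ S := by
  refine ⟨fun hS ↦ ⟨hS.prop, fun g ↦ ?_⟩, fun ⟨hS, hcover⟩ ↦ ⟨hS, fun T hT hST g hg ↦ ?_⟩⟩
  · by_contra! hg
    have hins : DSeparated G D (insert g S) :=
      (dSeparated_iff_pairwiseDisjoint.1 hS.prop).insert fun h hh _ ↦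
        disjoint_mul_singleton_iff.2 fun hk ↦ hg (h * g⁻¹) (Set.mem_insert_of_mem 1 hk)
          (by rwa [inv_mul_cancel_right])
    exact hg 1 one_mem_overlapSet
      ((one_mul g).symm ▸ hS.le_of_ge hins (Set.subset_insert g S) (Set.mem_insert g S))
  · obtain ⟨k, hk, hkg⟩ := hcover g
    have hk1 : k = 1 := dSeparated_iff_forall_overlapSet.1 hT k hk g hg (hST hkg)
    rwa [hk1, one_mul] at hkg

theorem maximal_dSeparated_preimage_mul_right (hS : Maximal (DSeparated G D) S) (a : G) :
    Maximal (DSeparated G D) ((· * a) ⁻¹' S) := by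
  rw [maximal_dSeparated_iff, dSeparated_iff_forall_overlapSet] at hS ⊢
  simp only [Set.mem_preimage, mul_assoc]
  exact ⟨fun k hk g ↦ hS.1 k hk (g * a), fun g ↦ hS.2 (g * a)⟩

theorem DSeparated.mem_iff_of_inter_subset (hT : DSeparated G D T)
    (hS : Maximal (DSeparated G D) S) (hST : S ∩ (overlapSet D * E) ⊆ T) {g : G} (hg : g ∈ E) :
    g ∈ T ↔ g ∈ S := by
  refine ⟨fun hgT ↦ ?_, fun hgS ↦ hST ⟨hgS, 1, one_mem_overlapSet, g, hg, one_mul g⟩⟩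
  obtain ⟨k, hk, hkg⟩ := (maximal_dSeparated_iff.1 hS).2 g
  have hkgT : k * g ∈ T := hST ⟨hkg, Set.mul_mem_mul hk hg⟩
  have hk1 : k = 1 := dSeparated_iff_forall_overlapSet.1 hT k hk g hgT hkgT
  rwa [hk1, one_mul] at hkg

theorem exists_maximal_dSeparated_mem_iff {E₁ E₂ S₁ S₂ : Set G}
    (hE : Disjoint (D * overlapSet D * E₁) (D * overlapSet D * E₂))
    (hS₁ : Maximal (DSeparated G D) S₁) (hS₂ : Maximal (DSeparated G D) S₂) :
    ∃ T, Maximal (DSeparated G D) T ∧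
      (∀ g ∈ E₁, g ∈ T ↔ g ∈ S₁) ∧ ∀ g ∈ E₂, g ∈ T ↔ g ∈ S₂ := by
  have hunion : DSeparated G D (S₁ ∩ (overlapSet D * E₁) ∪ S₂ ∩ (overlapSet D * E₂)) := by
    refine (hS₁.prop.subset Set.inter_subset_left).union
      (hS₂.prop.subset Set.inter_subset_left) ?_
    rw [mul_assoc, mul_assoc] at hE
    exact hE.mono (Set.mul_subset_mul_left Set.inter_subset_right)
      (Set.mul_subset_mul_left Set.inter_subset_right)
  obtain ⟨T, hsub, hT⟩ := hunion.exists_subset_maximal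
  rw [Set.union_subset_iff] at hsub
  exact ⟨T, hT, fun _ ↦ hT.prop.mem_iff_of_inter_subset hS₁ hsub.1,
    fun _ ↦ hT.prop.mem_iff_of_inter_subset hS₂ hsub.2⟩

/-- The subshift of all maximal `D`-separated subsets of `G`, encoded by their indicator
functions. -/
def maximalSeparatedSubshift (D : Set G) : Set (G → Bool) :=
  {y | Maximal (DSeparated G D) {g | y g = true}}

theorem decide_mem_maximalSeparatedSubshift [DecidablePred (· ∈ S)]
    (hS : Maximal (DSeparated G D) S) :
    (fun g ↦ decide (g ∈ S)) ∈ maximalSeparatedSubshift D := by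
  simpa [maximalSeparatedSubshift] using hS

theorem maximalSeparatedSubshift_nonempty : (maximalSeparatedSubshift D).Nonempty := by
  classical
  have hempty : DSeparated G D ∅ := Set.pairwiseDisjoint_empty
  obtain ⟨S, -, hS⟩ := hempty.exists_subset_maximal
  exact ⟨_, decide_mem_maximalSeparatedSubshift hS⟩

theorem isClosed_maximalSeparatedSubshift (hD : D.Finite) :
    IsClosed (maximalSeparatedSubshift D) := by
  have hcoord (g : G) : IsClopen {y : G → Bool | y g = true} :=
    (isClopen_discrete {true}).preimage (continuous_apply g)
  have hY : maximalSeparatedSubshift D =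
      (⋂ k ∈ overlapSet D, ⋂ g, {y | y g = true → y (k * g) = true → k = 1}) ∩
        ⋂ g, ⋃ k ∈ overlapSet D, {y | y (k * g) = true} := by
    ext y
    simp [maximalSeparatedSubshift, maximal_dSeparated_iff, dSeparated_iff_forall_overlapSet]
  rw [hY]
  refine .inter ?_ (isClosed_iInter fun g ↦ (finite_overlapSet hD).isClosed_biUnion fun k _ ↦
    (hcoord (k * g)).isClosed)
  exact isClosed_biInter fun k _ ↦ isClosed_iInter fun g ↦
    isClosed_imp (hcoord g).isOpen (isClosed_imp (hcoord (k * g)).isOpen isClosed_const)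

theorem smul_mem_maximalSeparatedSubshift {y : G → Bool} (hy : y ∈ maximalSeparatedSubshift D)
    (a : G) : a • y ∈ maximalSeparatedSubshift D :=
  maximal_dSeparated_preimage_mul_right hy a

theorem stronglyIrreducible_maximalSeparatedSubshift (hD : D.Finite) :
    StronglyIrreducible G (maximalSeparatedSubshift D) := by
  classical
  refine ⟨D * overlapSet D, hD.mul (finite_overlapSet hD), fun E₁ E₂ _ _ hE z₁ hz₁ z₂ hz₂ ↦ ?_⟩
  obtain ⟨T, hT, hT₁, hT₂⟩ := exists_maximal_dSeparated_mem_iff hE hz₁ hz₂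
  refine ⟨fun g ↦ decide (g ∈ T), decide_mem_maximalSeparatedSubshift hT,
    fun g hg ↦ ?_, fun g hg ↦ ?_⟩
  · exact Bool.eq_iff_iff.2 (decide_eq_true_iff.trans (hT₁ g hg))
  · exact Bool.eq_iff_iff.2 (decide_eq_true_iff.trans (hT₂ g hg))

end Separated

theorem exists_strongly_irreducible_separated_subshift_general
    (G : Type*) [Group G] (D : Set G) (hD : D.Finite) :
    ∃ Y : Set (G → Bool), IsClosed Y ∧ (∀ (g : G), ∀ y ∈ Y, g • y ∈ Y) ∧
      Y.Nonempty ∧ StronglyIrreducible G Y ∧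
      ∀ y ∈ Y, DSeparated G D {g : G | y g = true} ∧ {g : G | y g = true}.Nonempty := by
  refine ⟨maximalSeparatedSubshift D, isClosed_maximalSeparatedSubshift hD,
    fun g y hy ↦ smul_mem_maximalSeparatedSubshift hy g, maximalSeparatedSubshift_nonempty,
    stronglyIrreducible_maximalSeparatedSubshift hD, fun y hy ↦ ?_⟩
  obtain ⟨hsep, hcover⟩ := maximal_dSeparated_iff.1 hy
  obtain ⟨k, -, hk⟩ := hcover 1
  exact ⟨hsep, k * 1, hk⟩

/-- Let `G` be a countable, infinite discrete group.  For every finite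
`D ⊆ G` there exists a (nonempty) strongly irreducible subshift `Y ⊆ 2^G` such that for
every `y ∈ Y` the set `{g : y g = 1}` is `D`-separated and nonempty. -/
theorem exists_strongly_irreducible_separated_subshift
    (G : Type*) [Group G] [Countable G] [Infinite G]
    (D : Set G) (hD : D.Finite) :
    ∃ Y : Set (G → Bool), IsClosed Y ∧ (∀ (g : G), ∀ y ∈ Y, g • y ∈ Y) ∧
      Y.Nonempty ∧ StronglyIrreducible G Y ∧
      ∀ y ∈ Y, DSeparated G D {g : G | y g = true} ∧ {g : G | y g = true}.Nonempty :=
  exists_strongly_irreducible_separated_subshift_general G D hD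
end
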